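/- Characterization of Ω-numbers (Solovay; Calude–Hertling–Khoussainov–Wang; Kučera–Slaman): For a left-c.e. real α ∈ (0,1), the following are equivalent: (i) α = Ω_V for some universal prefix-free machine V; (ii) α is Ω-like, i.e. β ≤_S α for every left-c.e. real β; (iii) α is Martin-Löf random. -/

import Mathlib

open scoped ENNReal NNReal Classical

namespace AR

/-- Elements of Cantor space `2^ω`: infinite binary sequences. -/
abbrev Seq := ℕ → Bool

/-- Finite binary strings `2^{<ω}`. -/
abbrev Str := List Bool

/-- The first `n` bits of a sequence `A`, as a finite string (`A↾n`). -/
def pre (A : Seq) (n : ℕ) : Str := List.ofFn fun i : Fin n => A i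

/-- The basic clopen cylinder `[σ]` of all sequences extending `σ`. -/
def cyl (σ : Str) : Set Seq := {A | pre A σ.length = σ}

/-- A measure on Cantor space is *fair-coin* if every cylinder `[σ]` has measure
`2^{-|σ|}`; this uniquely characterizes the usual product measure `μ` on `2^ω`. -/
def FairCoin (μ : MeasureTheory.Measure Seq) : Prop :=
  ∀ σ : Str, μ (cyl σ) = (2 : ℝ≥0∞)⁻¹ ^ σ.length

/-- A machine is a partial computable function `2^{<ω} ⇀ 2^{<ω}`. -/
def IsMachine (M : Str →. Str) : Prop := Partrec M

/-- Kolmogorov complexity of `τ` relative to the machine `M`: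
`C_M(τ) = min{|σ| : M(σ)↓ = τ}`, with value `∞` if no such `σ` exists. -/
noncomputable def Cplx (M : Str →. Str) (τ : Str) : ℕ∞ :=
  sInf ((fun σ : Str => (σ.length : ℕ∞)) '' {σ | τ ∈ M σ})

/-- A universal machine: a machine simulating every machine up to an additive
constant.  `Cplx U` for universal `U` is plain Kolmogorov complexity `C`. -/
def UniversalMachine (U : Str →. Str) : Prop :=
  IsMachine U ∧ ∀ M : Str →. Str, IsMachine M → ∃ c : ℕ, ∀ τ, Cplx U τ ≤ Cplx M τ + c

/-- A set of strings is prefix-free if none of its elements is a proper initial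
segment of another. -/
def PrefixFree (S : Set Str) : Prop :=
  ∀ σ ∈ S, ∀ τ ∈ S, σ <+: τ → σ = τ

/-- A prefix-free machine: a machine whose domain is prefix-free. -/
def PrefixFreeMachine (M : Str →. Str) : Prop :=
  IsMachine M ∧ PrefixFree {σ | (M σ).Dom}

/-- A universal prefix-free machine.  `Cplx U` for such `U` is prefix-free
Kolmogorov complexity `K`. -/
def UniversalPFMachine (U : Str →. Str) : Prop :=
  PrefixFreeMachine U ∧
    ∀ M : Str →. Str, PrefixFreeMachine M → ∃ c : ℕ, ∀ τ, Cplx U τ ≤ Cplx M τ + c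

/-- A c.e. (recursively enumerable) predicate. -/
def CEPred {α} [Primcodable α] (p : α → Prop) : Prop :=
  Partrec fun a => Part.assert (p a) fun _ => Part.some ()

/-- A Martin-Löf test: a sequence of uniformly Σ⁰₁ classes `U i`, given by a single
c.e. set `W` of pairs, with `μ (U i) ≤ 2^{-i}`. -/
def MLTest (μ : MeasureTheory.Measure Seq) (U : ℕ → Set Seq) : Prop :=
  ∃ W : Set (ℕ × Str), CEPred (· ∈ W) ∧
    (∀ i, U i = ⋃ σ ∈ {σ : Str | (i, σ) ∈ W}, cyl σ) ∧
    ∀ i, μ (U i) ≤ (2 : ℝ≥0∞)⁻¹ ^ i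

/-- `A` is Martin-Löf random if it passes every Martin-Löf test. -/
def MLRandom (μ : MeasureTheory.Measure Seq) (A : Seq) : Prop :=
  ∀ U : ℕ → Set Seq, MLTest μ U → A ∉ ⋂ i, U i

/-- The halting probability `Ω_V = Σ_{σ ∈ dom V} 2^{-|σ|}` of a machine `V`. -/
noncomputable def Omega (V : Str →. Str) : ℝ :=
  ∑' σ : Str, if (V σ).Dom then (2 : ℝ)⁻¹ ^ σ.length else 0

/-- The real number `0.A` in `[0,1]` whose binary expansion is `A ∈ 2^ω`. -/
noncomputable def binExp (A : Seq) : ℝ :=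
  ∑' n : ℕ, cond (A n) ((2 : ℝ)⁻¹ ^ (n + 1)) 0

/-- A real is left-c.e. if it is the limit of a computable strictly increasing
sequence of rationals. -/
def LeftCE (x : ℝ) : Prop :=
  ∃ q : ℕ → ℚ, Computable q ∧ StrictMono q ∧
    Filter.Tendsto (fun n => (q n : ℝ)) Filter.atTop (nhds x)

/-- Solovay reducibility `a ≤_S b` for (left-c.e.) reals: there are `c ∈ ℕ` and a
partial computable `f : ℚ ⇀ ℚ` such that for every rational `q < b`, `f(q)↓`,
`f(q) < a` and `a - f(q) < c (b - q)`. -/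
def SolovayLE (a b : ℝ) : Prop :=
  ∃ (c : ℕ) (f : ℚ →. ℚ), Partrec f ∧
    ∀ q : ℚ, (q : ℝ) < b →
      ∃ r ∈ f q, (r : ℝ) < a ∧ a - (r : ℝ) < c * (b - (q : ℝ))

section ComputabilityCalculus

variable {α β : Type*} [Primcodable α] [Primcodable β]

theorem computablePred_of_bool {p : α → Prop} {f : α → Bool} (hf : Computable f)
    (h : ∀ a, f a = true ↔ p a) : ComputablePred p :=
  ComputablePred.computable_iff.2 ⟨f, hf, funext fun a => propext (h a).symm⟩

theorem exists_bool_of_computablePred {p : α → Prop} (hp : ComputablePred p) :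
    ∃ f : α → Bool, Computable f ∧ ∀ a, f a = true ↔ p a := by
  obtain ⟨f, hf, rfl⟩ := ComputablePred.computable_iff.1 hp
  exact ⟨f, hf, fun a => Iff.rfl⟩

theorem _root_.ComputablePred.comp {p : β → Prop} (hp : ComputablePred p) {f : α → β}
    (hf : Computable f) : ComputablePred fun a => p (f a) := by
  obtain ⟨g, hg, h⟩ := exists_bool_of_computablePred hp
  exact computablePred_of_bool (hg.comp hf) fun a => h _

theorem _root_.ComputablePred.and {p q : α → Prop} (hp : ComputablePred p)
    (hq : ComputablePred q) : ComputablePred fun a => p a ∧ q a := by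
  obtain ⟨f, hf, h⟩ := exists_bool_of_computablePred hp
  obtain ⟨g, hg, h'⟩ := exists_bool_of_computablePred hq
  exact computablePred_of_bool (Primrec.and.to_comp.comp hf hg) fun a => by simp [h, h']

theorem _root_.ComputablePred.or {p q : α → Prop} (hp : ComputablePred p)
    (hq : ComputablePred q) : ComputablePred fun a => p a ∨ q a := by
  obtain ⟨f, hf, h⟩ := exists_bool_of_computablePred hp
  obtain ⟨g, hg, h'⟩ := exists_bool_of_computablePred hq
  exact computablePred_of_bool (Primrec.or.to_comp.comp hf hg) fun a => by simp [h, h']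

theorem _root_.ComputablePred.imp {p q : α → Prop} (hp : ComputablePred p)
    (hq : ComputablePred q) : ComputablePred fun a => p a → q a :=
  (hp.not.or hq).of_eq fun _ => imp_iff_not_or.symm

theorem computable_ite {p : α → Prop} [DecidablePred p] (hp : ComputablePred p) {f g : α → β}
    (hf : Computable f) (hg : Computable g) :
    Computable fun a => if p a then f a else g a := by
  obtain ⟨c, hc, h⟩ := exists_bool_of_computablePred hp
  refine (Computable.cond hc hf hg).of_eq fun a => ?_
  by_cases hpa : p a
  · simp [hpa, (h a).2 hpa]
  · have : c a = false := by simpa [← h a] using hpa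
    simp [hpa, this]

theorem _root_.ComputablePred.forall_lt {p : α → ℕ → Prop}
    (hp : ComputablePred fun x : α × ℕ => p x.1 x.2) {f : α → ℕ} (hf : Computable f) :
    ComputablePred fun a => ∀ k < f a, p a k := by
  obtain ⟨c, hc, h⟩ := exists_bool_of_computablePred hp
  let F : α → ℕ → Bool := fun a n => Nat.rec true (fun k b => b && c (a, k)) n
  have hF : Computable fun a => F a (f a) := by
    refine Computable.nat_rec (f := f) (g := fun _ => true)
      (h := fun a (x : ℕ × Bool) => x.2 && c (a, x.1)) hf (Computable.const _) ?_
    exact Primrec.and.to_comp.comp (Computable.snd.comp Computable.snd)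
      (hc.comp (Computable.pair Computable.fst (Computable.fst.comp Computable.snd)))
  have key : ∀ a n, F a n = true ↔ ∀ k < n, p a k := by
    intro a n
    induction n with
    | zero => simp [F]
    | succ n ih =>
      have : F a (n + 1) = (F a n && c (a, n)) := rfl
      rw [this, Bool.and_eq_true, ih, h, Nat.forall_lt_succ_right]
  exact computablePred_of_bool hF fun a => key a _

theorem _root_.ComputablePred.exists_lt {p : α → ℕ → Prop}
    (hp : ComputablePred fun x : α × ℕ => p x.1 x.2) {f : α → ℕ} (hf : Computable f) :
    ComputablePred fun a => ∃ k < f a, p a k :=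
  (ComputablePred.forall_lt (p := fun a k => ¬ p a k) hp.not hf).not.of_eq fun a => by
    push Not; rfl

theorem computablePred_eq {f g : α → β} (hf : Computable f) (hg : Computable g) :
    ComputablePred fun a => f a = g a :=
  ComputablePred.comp (p := fun x : β × β => x.1 = x.2)
    (PrimrecPred.computablePred (Primrec.eq (α := β))) (hf.pair hg)

theorem computablePred_nat_le {f g : α → ℕ} (hf : Computable f) (hg : Computable g) :
    ComputablePred fun a => f a ≤ g a :=
  ComputablePred.comp (p := fun x : ℕ × ℕ => x.1 ≤ x.2)
    (PrimrecPred.computablePred Primrec.nat_le) (hf.pair hg)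

theorem computablePred_nat_lt {f g : α → ℕ} (hf : Computable f) (hg : Computable g) :
    ComputablePred fun a => f a < g a :=
  ComputablePred.comp (p := fun x : ℕ × ℕ => x.1 < x.2)
    (PrimrecPred.computablePred Primrec.nat_lt) (hf.pair hg)

theorem nat_add_comp {f g : α → ℕ} (hf : Computable f) (hg : Computable g) :
    Computable fun a => f a + g a := Primrec.nat_add.to_comp.comp hf hg

theorem nat_sub_comp {f g : α → ℕ} (hf : Computable f) (hg : Computable g) :
    Computable fun a => f a - g a := Primrec.nat_sub.to_comp.comp hf hg

theorem nat_mul_comp {f g : α → ℕ} (hf : Computable f) (hg : Computable g) :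
    Computable fun a => f a * g a := Primrec.nat_mul.to_comp.comp hf hg

theorem nat_div_comp {f g : α → ℕ} (hf : Computable f) (hg : Computable g) :
    Computable fun a => f a / g a := Primrec.nat_div.to_comp.comp hf hg

theorem nat_mod_comp {f g : α → ℕ} (hf : Computable f) (hg : Computable g) :
    Computable fun a => f a % g a := Primrec.nat_mod.to_comp.comp hf hg

theorem nat_pow_comp {f g : α → ℕ} (hf : Computable f) (hg : Computable g) :
    Computable fun a => f a ^ g a :=
  (Primrec₂.unpaired'.1 Nat.Primrec.pow).to_comp.comp hf hg

/-- A function with a decidable graph is computable. -/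
theorem computable_of_graph {f : α → β}
    (h : ComputablePred fun x : α × β => f x.1 = x.2) : Computable f := by
  obtain ⟨c, hc, hcs⟩ := exists_bool_of_computablePred h
  let F : α → ℕ → Option β := fun a n =>
    (Encodable.decode n : Option β).bind fun b => cond (c (a, b)) (some b) none
  have hF : Computable₂ F := by
    refine Computable.option_bind (Computable.decode.comp Computable.snd) ?_
    refine Computable.cond ?_ (Computable.option_some.comp Computable.snd) (Computable.const _)
    exact hc.comp (Computable.pair (Computable.fst.comp Computable.fst) Computable.snd)
  refine (Partrec.rfindOpt hF).of_eq_tot fun a => ?_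
  have hsound : ∀ n b, b ∈ F a n → b = f a := by
    intro n b hb
    simp only [F, Option.mem_def, Option.bind_eq_some_iff] at hb
    obtain ⟨b', -, hb'⟩ := hb
    cases hcb : c (a, b') with
    | false => simp [hcb] at hb'
    | true =>
      simp only [hcb, cond_true, Option.some.injEq] at hb'
      rw [← hb']; exact ((hcs _).1 hcb).symm
  have hdom : (Nat.rfindOpt (F a)).Dom := by
    refine Nat.rfindOpt_dom.2 ⟨Encodable.encode (f a), f a, ?_⟩
    simp [F, (hcs (a, f a)).2 rfl]
  obtain ⟨n, hn⟩ := Nat.rfindOpt_spec (Part.get_mem hdom)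
  rw [← hsound n _ hn]
  exact Part.get_mem hdom

theorem computable_sum_range {M : Type*} [Primcodable M] [AddCommMonoid M]
    (hadd : Computable₂ fun x y : M => x + y) {F : α → ℕ → M}
    (hF : Computable₂ F) {N : α → ℕ} (hN : Computable N) :
    Computable fun a => ∑ k ∈ Finset.range (N a), F a k := by
  have : Computable fun a => (Nat.rec 0 (fun k s => s + F a k) (N a) : M) := by
    refine Computable.nat_rec (f := N) (g := fun _ => (0 : M))
      (h := fun a (x : ℕ × M) => x.2 + F a x.1) hN (Computable.const _) ?_
    exact hadd.comp (Computable.snd.comp Computable.snd)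
      (hF.comp Computable.fst (Computable.fst.comp Computable.snd))
  refine this.of_eq fun a => ?_
  induction N a with
  | zero => simp
  | succ n ih => rw [Finset.sum_range_succ, ← ih]

/-- Every partial computable function has a computable monotone approximation by stages. -/
theorem exists_stage_approximation {f : α →. β} (hf : Partrec f) :
    ∃ h : ℕ → α → Option β, Computable₂ h ∧ (∀ s t a b, s ≤ t → h s a = some b → h t a = some b) ∧
      (∀ s a b, h s a = some b → Encodable.encode a < s) ∧
      ∀ a b, b ∈ f a ↔ ∃ s, h s a = some b := by
  obtain ⟨c, hc⟩ := Nat.Partrec.Code.exists_code.1 hf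
  refine ⟨fun s a => (c.evaln s (Encodable.encode a)).bind fun n => Encodable.decode n,
    ?_, ?_, ?_, ?_⟩
  · refine Computable.option_bind ?_ (Computable.decode.comp Computable.snd)
    exact Nat.Partrec.Code.primrec_evaln.to_comp.comp
      ((Computable.fst.pair (Computable.const c)).pair (Computable.encode.comp Computable.snd))
  · intro s t a b hst h
    simp only [Option.bind_eq_some_iff] at h ⊢
    obtain ⟨n, hn, hb⟩ := h
    exact ⟨n, Nat.Partrec.Code.evaln_mono hst hn, hb⟩
  · intro s a b h
    simp only [Option.bind_eq_some_iff] at h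
    obtain ⟨n, hn, -⟩ := h
    exact Nat.Partrec.Code.evaln_bound hn
  · intro a b
    have hev : c.eval (Encodable.encode a) = (f a).map Encodable.encode := by rw [hc]; simp
    constructor
    · intro hb
      have : Encodable.encode b ∈ c.eval (Encodable.encode a) := by
        rw [hev]; exact Part.mem_map _ hb
      obtain ⟨s, hs⟩ := Nat.Partrec.Code.evaln_complete.1 this
      exact ⟨s, by simp [Option.mem_def.1 hs]⟩
    · rintro ⟨s, hs⟩
      simp only [Option.bind_eq_some_iff] at hs
      obtain ⟨n, hn, hb⟩ := hs
      have := Nat.Partrec.Code.evaln_sound hn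
      rw [hev, Part.mem_map_iff] at this
      obtain ⟨b', hb', rfl⟩ := this
      simp only [Encodable.encodek, Option.some.injEq] at hb
      exact hb ▸ hb'

theorem cePred_exists_nat {p : α → ℕ → Prop} (hp : ComputablePred fun x : α × ℕ => p x.1 x.2) :
    CEPred fun a => ∃ n, p a n := by
  obtain ⟨c, hc, h⟩ := exists_bool_of_computablePred hp
  have : Partrec fun a => Nat.rfind fun n => Part.some (c (a, n)) :=
    Partrec.rfind (p := fun a n => Part.some (c (a, n))) hc.partrec.to₂
  refine this.dom_re.of_eq fun a => ?_
  refine Nat.rfind_dom'.trans ?_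
  constructor
  · rintro ⟨n, hn, -⟩
    refine ⟨n, (h (a, n)).1 ?_⟩
    simpa using hn
  · rintro ⟨n, hn⟩
    exact ⟨n, by simpa using ((h (a, n)).2 hn), fun _ => by simp⟩

theorem CEPred.exists_stage_approximation {p : α → Prop} (hp : CEPred p) :
    ∃ h : ℕ → α → Prop, ComputablePred (fun x : ℕ × α => h x.1 x.2) ∧
      (∀ s t a, s ≤ t → h s a → h t a) ∧ ∀ a, p a ↔ ∃ s, h s a := by
  obtain ⟨h, hc, hm, -, hs⟩ := AR.exists_stage_approximation hp
  refine ⟨fun s a => h s a = some (), computablePred_eq hc (Computable.const _),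
    fun s t a hst => hm s t a () hst, fun a => ?_⟩
  rw [← hs a ()]
  simp [Part.mem_assert_iff]

end ComputabilityCalculus

section RationalComputability

open Encodable

/-- The pair coding of a rational by its numerator and denominator. -/
def ratCode (q : ℚ) : ℕ := Nat.pair (encode q.num) q.den

theorem encode_rat_eq_count (q : ℚ) :
    @encode ℚ Primcodable.toEncodable q = Nat.count (· ∈ Set.range ratCode) (ratCode q) := by
  have hirrel : ∀ (p : ℕ → Prop) (i j : DecidablePred p) (n : ℕ),
      @Nat.count p i n = @Nat.count p j n := fun p i j n => by
    rw [Subsingleton.elim i j]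
  exact Eq.trans (by rfl) (hirrel _
    (fun n => @Encodable.decidableRangeEncode ℚ Rat.instEncodable n) _ (ratCode q))

theorem encode_int_ofNat (n : ℕ) : encode (n : ℤ) = 2 * n := rfl

theorem encode_int_negSucc (n : ℕ) : encode (Int.negSucc n) = 2 * n + 1 := rfl

theorem natAbs_eq_encode (z : ℤ) : z.natAbs = (encode z + 1) / 2 := by
  cases z with
  | ofNat n => rw [Int.ofNat_eq_natCast, encode_int_ofNat]; simp; omega
  | negSucc n => rw [encode_int_negSucc]; simp; omega

theorem toNat_eq_encode (z : ℤ) : z.toNat = if encode z % 2 = 0 then encode z / 2 else 0 := by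
  cases z with
  | ofNat n => rw [Int.ofNat_eq_natCast, encode_int_ofNat]; simp
  | negSucc n => rw [encode_int_negSucc]; simp

theorem mem_range_ratCode (n : ℕ) :
    n ∈ Set.range ratCode ↔ 0 < n.unpair.2 ∧ ((n.unpair.1 + 1) / 2).Coprime n.unpair.2 := by
  constructor
  · rintro ⟨q, rfl⟩
    simp only [ratCode, Nat.unpair_pair, ← natAbs_eq_encode]
    exact ⟨q.pos, q.reduced⟩
  · rintro ⟨h, hc⟩
    refine ⟨⟨Denumerable.ofNat ℤ n.unpair.1, n.unpair.2, h.ne', ?_⟩, ?_⟩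
    · rwa [natAbs_eq_encode, Denumerable.encode_ofNat]
    · change Nat.pair (encode (Denumerable.ofNat ℤ n.unpair.1)) n.unpair.2 = n
      rw [Denumerable.encode_ofNat, Nat.pair_unpair]

theorem computablePred_coprime :
    ComputablePred fun x : ℕ × ℕ => 0 < x.2 ∧ x.1.Coprime x.2 := by
  have h : ComputablePred fun x : ℕ × ℕ =>
      0 < x.2 ∧ ∀ k < x.2 + 1, x.1 % k = 0 → x.2 % k = 0 → k = 1 := by
    refine (computablePred_nat_lt (Computable.const 0) Computable.snd).and ?_
    refine ComputablePred.forall_lt (p := fun (x : ℕ × ℕ) k =>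
      x.1 % k = 0 → x.2 % k = 0 → k = 1) ?_ (Computable.succ.comp Computable.snd)
    exact (computablePred_eq (nat_mod_comp (Computable.fst.comp Computable.fst) Computable.snd)
      (Computable.const 0)).imp ((computablePred_eq
        (nat_mod_comp (Computable.snd.comp Computable.fst) Computable.snd)
        (Computable.const 0)).imp (computablePred_eq Computable.snd (Computable.const 1)))
  refine h.of_eq fun x => and_congr_right fun hx => ?_
  constructor
  · intro h
    exact h _ (Nat.lt_succ_of_le (Nat.le_of_dvd hx (Nat.gcd_dvd_right _ _)))
      (Nat.mod_eq_zero_of_dvd (Nat.gcd_dvd_left _ _))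
      (Nat.mod_eq_zero_of_dvd (Nat.gcd_dvd_right _ _))
  · intro h k _ h1 h2
    exact Nat.eq_one_of_dvd_coprimes h (Nat.dvd_of_mod_eq_zero h1) (Nat.dvd_of_mod_eq_zero h2)

theorem computablePred_mem_range_ratCode : ComputablePred fun n => n ∈ Set.range ratCode := by
  refine ComputablePred.of_eq ?_ fun n => (mem_range_ratCode n).symm
  have hfst : Computable fun n : ℕ => n.unpair.1 := Computable.fst.comp Computable.unpair
  have hsnd : Computable fun n : ℕ => n.unpair.2 := Computable.snd.comp Computable.unpair
  exact computablePred_coprime.comp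
    ((nat_div_comp (nat_add_comp hfst (Computable.const 1)) (Computable.const 2)).pair hsnd)

theorem computable_ratCode : Computable ratCode := by
  have hcount : Computable fun n => Nat.count (· ∈ Set.range ratCode) n := by
    have : Computable fun n => ∑ k ∈ Finset.range n,
        if k ∈ Set.range ratCode then (1 : ℕ) else 0 := by
      refine computable_sum_range Primrec.nat_add.to_comp
        (F := fun _ k => if k ∈ Set.range ratCode then (1 : ℕ) else 0) ?_ Computable.id
      exact computable_ite (computablePred_mem_range_ratCode.comp Computable.snd)
        (Computable.const 1) (Computable.const 0)
    refine this.of_eq fun n => ?_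
    rw [Nat.count_eq_card_filter_range, Finset.card_filter]
  have hgraph : ComputablePred fun x : ℚ × ℕ => x.2 ∈ Set.range ratCode ∧
      Nat.count (· ∈ Set.range ratCode) x.2 = @encode ℚ Primcodable.toEncodable x.1 :=
    (computablePred_mem_range_ratCode.comp Computable.snd).and
      (computablePred_eq (hcount.comp Computable.snd) (Computable.encode.comp Computable.fst))
  refine computable_of_graph (hgraph.of_eq fun x => ?_)
  constructor
  · rintro ⟨⟨q, hq⟩, h⟩
    rw [← hq, ← encode_rat_eq_count] at h
    rw [← hq, (@encode_injective ℚ Primcodable.toEncodable) h]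
  · intro h
    rw [← h, ← encode_rat_eq_count]
    exact ⟨⟨_, rfl⟩, rfl⟩

/-- The positive part of the numerator of a rational. -/
def ratPos (q : ℚ) : ℕ := q.num.toNat

/-- The negative part of the numerator of a rational. -/
def ratNeg (q : ℚ) : ℕ := q.num.natAbs - q.num.toNat

theorem rat_eq_parts (q : ℚ) : q = ((ratPos q : ℚ) - ratNeg q) / q.den := by
  have h : ((ratPos q : ℤ) - ratNeg q) = q.num := by
    unfold ratPos ratNeg; omega
  have h' : ((ratPos q : ℚ) - ratNeg q) = q.num := by exact_mod_cast h
  rw [h', Rat.num_div_den]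

theorem computable_ratDen : Computable fun q : ℚ => q.den :=
  (Computable.snd.comp (Computable.unpair.comp computable_ratCode)).of_eq fun q => by
    simp [ratCode]

theorem computable_encode_num : Computable fun q : ℚ => encode q.num :=
  (Computable.fst.comp (Computable.unpair.comp computable_ratCode)).of_eq fun q => by
    simp [ratCode]

theorem computable_ratPos : Computable ratPos := by
  have := computable_ite (computablePred_eq
    (nat_mod_comp computable_encode_num (Computable.const 2)) (Computable.const 0))
    (nat_div_comp computable_encode_num (Computable.const 2)) (Computable.const 0)
  exact this.of_eq fun q => (toNat_eq_encode _).symm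

theorem computable_ratNeg : Computable ratNeg :=
  (nat_sub_comp (nat_div_comp (nat_add_comp computable_encode_num (Computable.const 1))
    (Computable.const 2)) computable_ratPos).of_eq fun q => by
      rw [ratNeg, natAbs_eq_encode]; rfl

variable {α : Type*} [Primcodable α]

theorem div_parts_lt_iff {a b c d e f : ℕ} (hc : 0 < c) (hf : 0 < f) :
    ((a : ℚ) - b) / c < ((d : ℚ) - e) / f ↔ a * f + e * c < d * c + b * f := by
  rw [div_lt_div_iff₀ (by positivity) (by positivity), ← Nat.cast_lt (α := ℚ)]
  push_cast
  constructor <;> intro h <;> linarith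

theorem div_parts_eq_iff {a b c d e f : ℕ} (hc : 0 < c) (hf : 0 < f) :
    ((a : ℚ) - b) / c = ((d : ℚ) - e) / f ↔ a * f + e * c = d * c + b * f := by
  rw [div_eq_div_iff (by positivity) (by positivity), ← Nat.cast_inj (R := ℚ)]
  push_cast
  constructor <;> intro h <;> linarith

theorem computablePred_rat_lt {f g : α → ℚ} (hf : Computable f) (hg : Computable g) :
    ComputablePred fun a => f a < g a := by
  have hfp := computable_ratPos.comp hf
  have hfn := computable_ratNeg.comp hf
  have hfd := computable_ratDen.comp hf
  have hgp := computable_ratPos.comp hg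
  have hgn := computable_ratNeg.comp hg
  have hgd := computable_ratDen.comp hg
  refine (computablePred_nat_lt (nat_add_comp (nat_mul_comp hfp hgd) (nat_mul_comp hgn hfd))
    (nat_add_comp (nat_mul_comp hgp hfd) (nat_mul_comp hfn hgd))).of_eq fun a => ?_
  rw [← div_parts_lt_iff (f a).pos (g a).pos, ← rat_eq_parts, ← rat_eq_parts]

theorem computablePred_rat_le {f g : α → ℚ} (hf : Computable f) (hg : Computable g) :
    ComputablePred fun a => f a ≤ g a :=
  (computablePred_rat_lt hg hf).not.of_eq fun _ => not_lt

/-- A fraction whose numerator is a difference of computable naturals is computable. -/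
theorem computable_rat_mk {f g h : α → ℕ} (hf : Computable f) (hg : Computable g)
    (hh : Computable h) (hpos : ∀ a, 0 < h a) :
    Computable fun a => ((f a : ℚ) - g a) / h a := by
  have c1 : Computable (Prod.fst : α × ℚ → α) := Computable.fst
  have c2 : Computable (Prod.snd : α × ℚ → ℚ) := Computable.snd
  refine computable_of_graph ?_
  refine (computablePred_eq
    (nat_add_comp (nat_mul_comp (hf.comp c1) (computable_ratDen.comp c2))
      (nat_mul_comp (computable_ratNeg.comp c2) (hh.comp c1)))
    (nat_add_comp (nat_mul_comp (computable_ratPos.comp c2) (hh.comp c1))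
      (nat_mul_comp (hg.comp c1) (computable_ratDen.comp c2)))).of_eq fun x => ?_
  rw [← div_parts_eq_iff (hpos _) x.2.pos, ← rat_eq_parts]

theorem rat_add_comp {f g : α → ℚ} (hf : Computable f) (hg : Computable g) :
    Computable fun a => f a + g a := by
  have hfp := computable_ratPos.comp hf
  have hfn := computable_ratNeg.comp hf
  have hfd := computable_ratDen.comp hf
  have hgp := computable_ratPos.comp hg
  have hgn := computable_ratNeg.comp hg
  have hgd := computable_ratDen.comp hg
  refine (computable_rat_mk (nat_add_comp (nat_mul_comp hfp hgd) (nat_mul_comp hgp hfd))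
    (nat_add_comp (nat_mul_comp hfn hgd) (nat_mul_comp hgn hfd)) (nat_mul_comp hfd hgd)
    fun a => Nat.mul_pos (f a).pos (g a).pos).of_eq fun a => ?_
  conv_rhs => rw [rat_eq_parts (f a), rat_eq_parts (g a)]
  have h1 : ((f a).den : ℚ) ≠ 0 := by exact_mod_cast (f a).pos.ne'
  have h2 : ((g a).den : ℚ) ≠ 0 := by exact_mod_cast (g a).pos.ne'
  push_cast
  field_simp
  ring

theorem rat_mul_comp {f g : α → ℚ} (hf : Computable f) (hg : Computable g) :
    Computable fun a => f a * g a := by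
  have hfp := computable_ratPos.comp hf
  have hfn := computable_ratNeg.comp hf
  have hfd := computable_ratDen.comp hf
  have hgp := computable_ratPos.comp hg
  have hgn := computable_ratNeg.comp hg
  have hgd := computable_ratDen.comp hg
  refine (computable_rat_mk (nat_add_comp (nat_mul_comp hfp hgp) (nat_mul_comp hfn hgn))
    (nat_add_comp (nat_mul_comp hfp hgn) (nat_mul_comp hfn hgp)) (nat_mul_comp hfd hgd)
    fun a => Nat.mul_pos (f a).pos (g a).pos).of_eq fun a => ?_
  conv_rhs => rw [rat_eq_parts (f a), rat_eq_parts (g a)]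
  have h1 : ((f a).den : ℚ) ≠ 0 := by exact_mod_cast (f a).pos.ne'
  have h2 : ((g a).den : ℚ) ≠ 0 := by exact_mod_cast (g a).pos.ne'
  push_cast
  field_simp
  ring

theorem rat_sub_comp {f g : α → ℚ} (hf : Computable f) (hg : Computable g) :
    Computable fun a => f a - g a :=
  (rat_add_comp hf (rat_mul_comp (Computable.const (-1)) hg)).of_eq fun a => by ring

theorem rat_natCast_comp {f : α → ℕ} (hf : Computable f) : Computable fun a => (f a : ℚ) :=
  (computable_rat_mk hf (Computable.const 0) (Computable.const 1) fun _ => one_pos).of_eq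
    fun a => by simp

theorem rat_natFloor_comp {f : α → ℚ} (hf : Computable f) : Computable fun a => ⌊f a⌋₊ := by
  refine (nat_div_comp (computable_ratPos.comp hf) (computable_ratDen.comp hf)).of_eq fun a => ?_
  have h : 0 < ((f a).den : ℚ) := by exact_mod_cast (f a).pos
  rcases le_total 0 (f a) with h0 | h0
  · have : ((ratPos (f a) : ℕ) : ℚ) = (f a).num := by
      have : ((ratPos (f a) : ℕ) : ℤ) = (f a).num := Int.toNat_of_nonneg (Rat.num_nonneg.2 h0)
      exact_mod_cast this
    conv_rhs => rw [← Rat.num_div_den (f a), ← this]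
    rw [Nat.floor_div_eq_div]
  · have : ratPos (f a) = 0 := Int.toNat_of_nonpos (Rat.num_nonpos.2 h0)
    rw [this, Nat.floor_of_nonpos h0, Nat.zero_div]

theorem rat_inv_two_pow_comp {f : α → ℕ} (hf : Computable f) :
    Computable fun a => (2 : ℚ)⁻¹ ^ f a :=
  (computable_rat_mk (Computable.const 1) (Computable.const 0)
    (nat_pow_comp (Computable.const 2) hf) fun _ => by positivity).of_eq fun a => by simp

theorem rat_two_pow_comp {f : α → ℕ} (hf : Computable f) :
    Computable fun a => (2 : ℚ) ^ f a :=
  (rat_natCast_comp (nat_pow_comp (Computable.const 2) hf)).of_eq fun a => by simp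

end RationalComputability

section BinaryStrings

/-- The natural number with binary representation `σ` (most significant bit first). -/
def val (σ : Str) : ℕ := σ.foldl (fun a b => 2 * a + b.toNat) 0

@[simp] theorem val_nil : val [] = 0 := rfl

theorem val_concat (σ : Str) (b : Bool) : val (σ ++ [b]) = 2 * val σ + b.toNat := by
  simp [val, List.foldl_append]

theorem val_append (σ τ : Str) : val (σ ++ τ) = val σ * 2 ^ τ.length + val τ := by
  induction τ using List.reverseRecOn with
  | nil => simp
  | append_singleton τ b ih =>
    rw [← List.append_assoc, val_concat, ih, val_concat]
    simp [pow_succ]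
    ring

theorem val_lt (σ : Str) : val σ < 2 ^ σ.length := by
  induction σ using List.reverseRecOn with
  | nil => simp
  | append_singleton τ b ih =>
    rw [val_concat, List.length_append, List.length_singleton, pow_succ]
    have := Bool.toNat_le b
    omega

theorem val_injective_of_length {σ τ : Str} (hl : σ.length = τ.length) (hv : val σ = val τ) :
    σ = τ := by
  induction σ using List.reverseRecOn generalizing τ with
  | nil => exact (List.length_eq_zero_iff.1 hl.symm).symm
  | append_singleton σ b ih =>
    rcases List.eq_nil_or_concat τ with rfl | ⟨τ', c, rfl⟩
    · simp at hl
    · rw [List.concat_eq_append] at *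
      rw [val_concat, val_concat] at hv
      have hb := Bool.toNat_le b
      have hc := Bool.toNat_le c
      have h1 : val σ = val τ' := by omega
      have h2 : b.toNat = c.toNat := by omega
      rw [ih (by simpa using hl) h1]
      cases b <;> cases c <;> simp_all

/-- The binary string of length `n` representing `v` modulo `2 ^ n`. -/
def strOf : ℕ → ℕ → Str
  | 0, _ => []
  | n + 1, v => strOf n (v / 2) ++ [decide (v % 2 = 1)]

@[simp] theorem length_strOf (n v : ℕ) : (strOf n v).length = n := by
  induction n generalizing v with
  | zero => rfl
  | succ n ih => simp [strOf, ih]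

theorem val_strOf {n v : ℕ} (h : v < 2 ^ n) : val (strOf n v) = v := by
  induction n generalizing v with
  | zero => simp at h; simp [strOf, h]
  | succ n ih =>
    rw [strOf, val_concat, ih (by rw [pow_succ] at h; omega)]
    rcases Nat.mod_two_eq_zero_or_one v with h' | h' <;> simp [h'] <;> omega

theorem strOf_val (σ : Str) : strOf σ.length (val σ) = σ :=
  val_injective_of_length (length_strOf _ _) (val_strOf (val_lt σ))

theorem strOf_injOn {n v w : ℕ} (hv : v < 2 ^ n) (hw : w < 2 ^ n) (h : strOf n v = strOf n w) :
    v = w := by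
  rw [← val_strOf hv, h, val_strOf hw]

theorem computable_val : Computable val := by
  refine Primrec.to_comp ?_
  refine Primrec.list_foldl (f := fun σ : Str => σ) (g := fun _ => 0)
    (h := fun _ (x : ℕ × Bool) => 2 * x.1 + x.2.toNat) Primrec.id (Primrec.const 0) ?_
  exact Primrec.nat_add.comp (Primrec.nat_mul.comp (Primrec.const 2)
    (Primrec.fst.comp Primrec.snd)) ((Primrec.dom_bool _).comp (Primrec.snd.comp Primrec.snd))

theorem computable_strOf : Computable₂ strOf := by
  have hval : ∀ n v, val (strOf n v) = v % 2 ^ n := by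
    intro n
    induction n with
    | zero => intro v; simp [strOf, Nat.mod_one]
    | succ n ih =>
      intro v
      rw [strOf, val_concat, ih, pow_succ', Nat.mod_mul]
      rcases Nat.mod_two_eq_zero_or_one v with h' | h'
      · simp [h']
      · simp [h']; omega
  refine computable_of_graph (f := fun x : ℕ × ℕ => strOf x.1 x.2) ?_
  have c1 : Computable fun x : (ℕ × ℕ) × Str => x.1.1 := Computable.fst.comp Computable.fst
  have c2 : Computable fun x : (ℕ × ℕ) × Str => x.1.2 := Computable.snd.comp Computable.fst
  have c3 : Computable fun x : (ℕ × ℕ) × Str => x.2 := Computable.snd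
  refine ((computablePred_eq (Computable.list_length.comp c3) c1).and
    (computablePred_eq (computable_val.comp c3)
      (nat_mod_comp c2 (nat_pow_comp (Computable.const 2) c1)))).of_eq ?_
  rintro ⟨⟨n, v⟩, σ⟩
  constructor
  · rintro ⟨h1, h2⟩
    exact val_injective_of_length (by simp [h1]) (by simpa [hval] using h2.symm)
  · intro h
    change strOf n v = σ at h
    subst h
    simp [hval]

/-- The left endpoint of the dyadic interval of reals coded by `σ`. -/
noncomputable def lo (σ : Str) : ℚ := val σ * 2⁻¹ ^ σ.length

/-- The right endpoint of the dyadic interval of reals coded by `σ`. -/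
noncomputable def hi (σ : Str) : ℚ := (val σ + 1) * 2⁻¹ ^ σ.length

theorem hi_eq (σ : Str) : hi σ = lo σ + 2⁻¹ ^ σ.length := by rw [hi, lo]; ring

theorem lo_lt_hi (σ : Str) : lo σ < hi σ := by
  rw [hi_eq]; linarith [show (0 : ℚ) < 2⁻¹ ^ σ.length by positivity]

theorem computable_lo : Computable lo :=
  rat_mul_comp (rat_natCast_comp computable_val) (rat_inv_two_pow_comp Computable.list_length)

theorem computable_hi : Computable hi :=
  rat_mul_comp (rat_add_comp (rat_natCast_comp computable_val) (Computable.const 1))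
    (rat_inv_two_pow_comp Computable.list_length)

theorem lo_le_of_prefix {σ τ : Str} (h : σ <+: τ) : lo σ ≤ lo τ ∧ hi τ ≤ hi σ := by
  obtain ⟨ρ, rfl⟩ := h
  have h1 : (val ρ : ℚ) + 1 ≤ 2 ^ ρ.length := by exact_mod_cast val_lt ρ
  have h2 : (2 : ℚ) ^ ρ.length * 2⁻¹ ^ ρ.length = 1 := by rw [← mul_pow]; norm_num
  have h3 : (0 : ℚ) < 2⁻¹ ^ σ.length := by positivity
  have h4 : (0 : ℚ) < 2⁻¹ ^ ρ.length := by positivity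
  have h5 : (val ρ + 1) * (2 : ℚ)⁻¹ ^ ρ.length ≤ 1 :=
    (mul_le_mul_of_nonneg_right h1 h4.le).trans_eq h2
  simp only [lo, hi, val_append, List.length_append, pow_add]
  push_cast
  constructor
  · have : (val σ * 2 ^ ρ.length + val ρ : ℚ) * (2⁻¹ ^ σ.length * 2⁻¹ ^ ρ.length)
        = 2⁻¹ ^ σ.length * (val σ * (2 ^ ρ.length * 2⁻¹ ^ ρ.length) + val ρ * 2⁻¹ ^ ρ.length) := by
      ring
    rw [this, h2, mul_comm]
    gcongr
    have : (0 : ℚ) ≤ val ρ * 2⁻¹ ^ ρ.length := by positivity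
    linarith
  · have : (val σ * 2 ^ ρ.length + val ρ + 1 : ℚ) * (2⁻¹ ^ σ.length * 2⁻¹ ^ ρ.length)
        = 2⁻¹ ^ σ.length * (val σ * (2 ^ ρ.length * 2⁻¹ ^ ρ.length)
          + (val ρ + 1) * 2⁻¹ ^ ρ.length) := by
      ring
    rw [this, h2, mul_comm]
    gcongr
    linarith

theorem prefix_of_lo_le {σ τ : Str} (h1 : lo σ ≤ lo τ) (h2 : hi τ ≤ hi σ) : σ <+: τ := by
  have hlen : σ.length ≤ τ.length := by
    have : (2 : ℚ)⁻¹ ^ τ.length ≤ 2⁻¹ ^ σ.length := by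
      rw [hi_eq, hi_eq] at h2; linarith
    exact (pow_le_pow_iff_right_of_lt_one₀ (by norm_num) (by norm_num)).1 this
  have hp := lo_le_of_prefix (List.take_prefix σ.length τ)
  have hl : (τ.take σ.length).length = σ.length := by simp [hlen]
  have h3 := lo_lt_hi τ
  have h4 : (0 : ℚ) < 2⁻¹ ^ σ.length := by positivity
  have ha : lo σ < hi (τ.take σ.length) := by linarith
  have hb : lo (τ.take σ.length) < hi σ := by linarith
  simp only [lo, hi, hl] at ha hb
  have ha' := lt_of_mul_lt_mul_right ha h4.le
  have hb' := lt_of_mul_lt_mul_right hb h4.le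
  have ha'' : val σ < val (τ.take σ.length) + 1 := by exact_mod_cast ha'
  have hb'' : val (τ.take σ.length) < val σ + 1 := by exact_mod_cast hb'
  have := val_injective_of_length hl (by omega)
  rw [← this]
  exact List.take_prefix _ _

/-- Strings coding non-overlapping intervals are incomparable. -/
theorem not_comparable_of_hi_le_lo {σ τ : Str} (h : hi σ ≤ lo τ) :
    ¬ (σ <+: τ ∨ τ <+: σ) := by
  have h1 := lo_lt_hi σ
  have h2 := lo_lt_hi τ
  rintro (hp | hp)
  · have := lo_le_of_prefix hp; linarith
  · have := lo_le_of_prefix hp; linarith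

theorem pre_succ (A : Seq) (n : ℕ) : pre A (n + 1) = pre A n ++ [A n] := by
  rw [pre, pre, List.ofFn_succ_last]
  simp

@[simp] theorem length_pre (A : Seq) (n : ℕ) : (pre A n).length = n := by simp [pre]

theorem pre_prefix_pre (A : Seq) {m n : ℕ} (h : m ≤ n) : pre A m <+: pre A n := by
  induction h with
  | refl => exact List.prefix_rfl
  | step _ ih => rw [pre_succ]; exact ih.trans (List.prefix_append _ _)

theorem summable_binExp (A : Seq) : Summable fun n => cond (A n) ((2 : ℝ)⁻¹ ^ (n + 1)) 0 := by
  refine Summable.of_nonneg_of_le (fun n => ?_) (fun n => ?_)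
    ((summable_geometric_of_lt_one (r := (2 : ℝ)⁻¹) (by norm_num) (by norm_num)).mul_left 2⁻¹)
  · cases A n <;> simp
  · cases A n <;> simp [pow_succ', -inv_pow]

theorem sum_range_eq_lo (A : Seq) (n : ℕ) :
    ∑ k ∈ Finset.range n, cond (A k) ((2 : ℝ)⁻¹ ^ (k + 1)) 0 = (lo (pre A n) : ℝ) := by
  induction n with
  | zero => simp [lo, pre]
  | succ n ih =>
    rw [Finset.sum_range_succ, ih, pre_succ, lo, lo, val_concat]
    simp only [length_pre, List.length_append, List.length_singleton, pow_succ]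
    cases A n <;> simp <;> ring

theorem lo_pre_le_binExp (A : Seq) (n : ℕ) : (lo (pre A n) : ℝ) ≤ binExp A := by
  rw [← sum_range_eq_lo]
  refine (summable_binExp A).sum_le_tsum _ fun k _ => ?_
  cases A k <;> simp

theorem binExp_le_hi_pre (A : Seq) (n : ℕ) : binExp A ≤ (hi (pre A n) : ℝ) := by
  rw [binExp, ← (summable_binExp A).sum_add_tsum_nat_add n, sum_range_eq_lo, hi_eq]
  push_cast
  gcongr
  have hs : HasSum (fun k : ℕ => (2 : ℝ)⁻¹ ^ (n + 1) * 2⁻¹ ^ k) (2⁻¹ ^ (n + 1) * (1 - 2⁻¹)⁻¹) :=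
    (hasSum_geometric_of_lt_one (by norm_num) (by norm_num)).mul_left _
  have hb : ∑' k, cond (A (k + n)) ((2 : ℝ)⁻¹ ^ (k + n + 1)) 0 ≤ 2⁻¹ ^ (n + 1) * (1 - 2⁻¹)⁻¹ := by
    rw [← hs.tsum_eq]
    refine ((summable_nat_add_iff n).2 (summable_binExp A)).tsum_le_tsum (fun k => ?_) hs.summable
    rw [show k + n + 1 = n + 1 + k by ring, pow_add]
    cases A (k + n) <;> simp
  refine hb.trans (le_of_eq ?_)
  rw [length_pre, pow_succ]; norm_num; ring

theorem exists_binExp_eq {x : ℝ} (h0 : 0 < x) (h1 : x < 1) : ∃ A : Seq, binExp A = x := by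
  obtain ⟨d, -, hd⟩ := Real.ofDigits_SurjOn (b := 2) (by norm_num)
    (⟨h0.le, h1.le⟩ : x ∈ Set.Icc 0 1)
  refine ⟨fun n => decide (d n = 1), ?_⟩
  rw [← hd, binExp, Real.ofDigits]
  refine tsum_congr fun n => ?_
  rw [Real.ofDigitsTerm]
  have : d n = 0 ∨ d n = 1 := by omega
  rcases this with h | h <;> simp [h]

end BinaryStrings

section CantorMeasure

open MeasureTheory

theorem measurableSet_cyl (σ : Str) : MeasurableSet (cyl σ) := by
  have : Measurable fun A : Seq => fun i : Fin σ.length => A i :=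
    measurable_pi_lambda _ fun i => measurable_pi_apply _
  have h2 : cyl σ = (fun A : Seq => fun i : Fin σ.length => A i) ⁻¹'
      {f | List.ofFn f = σ} := rfl
  rw [h2]
  exact this (Set.toFinite _).measurableSet

theorem cyl_subset_of_prefix {σ τ : Str} (h : σ <+: τ) : cyl τ ⊆ cyl σ := by
  intro A hA
  have h1 : pre A σ.length <+: τ := by
    have := pre_prefix_pre A h.length_le
    rwa [show pre A τ.length = τ from hA] at this
  exact (List.prefix_of_prefix_length_le h1 h (by simp)).eq_of_length (by simp)

theorem pre_mem_cyl (A : Seq) (n : ℕ) : A ∈ cyl (pre A n) := by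
  simp [cyl]

theorem comparable_of_mem_cyl {σ τ : Str} {A : Seq} (h1 : A ∈ cyl σ) (h2 : A ∈ cyl τ) :
    σ <+: τ ∨ τ <+: σ := by
  rw [← show pre A σ.length = σ from h1, ← show pre A τ.length = τ from h2]
  rcases le_total σ.length τ.length with h | h
  · exact Or.inl (pre_prefix_pre A h)
  · exact Or.inr (pre_prefix_pre A h)

variable {μ : Measure Seq}

theorem FairCoin.measure_univ (hμ : FairCoin μ) : μ Set.univ = 1 := by
  have := hμ []
  simpa [cyl, pre] using this

/-- Kraft's inequality relative to a class containing all the cylinders. -/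
theorem FairCoin.tsum_le_measure (hμ : FairCoin μ) {S : Set Str} (hS : PrefixFree S)
    {C : Set Seq} (hC : ∀ σ ∈ S, cyl σ ⊆ C) :
    ∑' σ : S, (2 : ℝ≥0∞)⁻¹ ^ (σ : Str).length ≤ μ C := by
  calc ∑' σ : S, (2 : ℝ≥0∞)⁻¹ ^ (σ : Str).length = ∑' σ : S, μ (cyl σ) :=
        tsum_congr fun σ => (hμ _).symm
    _ = μ (⋃ σ : S, cyl σ) := by
        refine (measure_iUnion ?_ fun σ => measurableSet_cyl _).symm
        intro σ τ hne
        refine Set.disjoint_left.2 fun A h1 h2 => hne ?_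
        rcases comparable_of_mem_cyl h1 h2 with h | h
        · exact Subtype.ext (hS _ σ.2 _ τ.2 h)
        · exact Subtype.ext (hS _ τ.2 _ σ.2 h).symm
    _ ≤ μ C := measure_mono (Set.iUnion_subset fun σ => hC _ σ.2)

/-- The class of expansions of the points of an interval has measure at most its length. -/
theorem FairCoin.measure_Icc_le (hμ : FairCoin μ) {l u : ℝ} (hlu : l ≤ u) :
    μ {A | l ≤ binExp A ∧ binExp A ≤ u} ≤ ENNReal.ofReal (u - l) := by
  have key : ∀ N : ℕ, μ {A | l ≤ binExp A ∧ binExp A ≤ u}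
      ≤ ENNReal.ofReal (u - l + 2 * 2⁻¹ ^ N) := by
    intro N
    set I : Finset ℤ := Finset.Icc ⌈l * 2 ^ N - 1⌉ ⌊u * 2 ^ N⌋ with hI
    have hp : (0 : ℝ) < 2 ^ N := by positivity
    have hcard : (I.card : ℝ) ≤ (u - l) * 2 ^ N + 2 := by
      have h1 : ((⌊u * 2 ^ N⌋ + 1 - ⌈l * 2 ^ N - 1⌉ : ℤ) : ℝ) ≤ (u - l) * 2 ^ N + 2 := by
        push_cast
        linarith [Int.floor_le (u * 2 ^ N), Int.le_ceil (l * 2 ^ N - 1)]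
      have h2 : (0 : ℝ) ≤ (u - l) * 2 ^ N + 2 := by
        have := mul_nonneg (sub_nonneg.2 hlu) hp.le
        linarith
      rw [hI, Int.card_Icc]
      rcases le_total 0 (⌊u * 2 ^ N⌋ + 1 - ⌈l * 2 ^ N - 1⌉) with h | h
      · have : (((⌊u * 2 ^ N⌋ + 1 - ⌈l * 2 ^ N - 1⌉).toNat : ℤ) : ℝ)
            = ((⌊u * 2 ^ N⌋ + 1 - ⌈l * 2 ^ N - 1⌉ : ℤ) : ℝ) := by rw [Int.toNat_of_nonneg h]
        rw [Int.cast_natCast] at this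
        rw [this]; exact h1
      · rw [Int.toNat_of_nonpos h]; simpa using h2
    have hsub : {A | l ≤ binExp A ∧ binExp A ≤ u} ⊆ ⋃ v ∈ I, cyl (strOf N v.toNat) := by
      rintro A ⟨h1, h2⟩
      have h3 := lo_pre_le_binExp A N
      have h4 := binExp_le_hi_pre A N
      have h5 : (2 : ℝ)⁻¹ ^ N * 2 ^ N = 1 := by rw [← mul_pow]; norm_num
      simp only [lo, hi, length_pre] at h3 h4
      push_cast at h3 h4
      refine Set.mem_iUnion₂.2 ⟨(val (pre A N) : ℤ), ?_, ?_⟩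
      · rw [hI, Finset.mem_Icc]
        constructor
        · rw [Int.ceil_le]
          have := mul_le_mul_of_nonneg_right (h1.trans h4) hp.le
          rw [mul_assoc, h5] at this
          push_cast; linarith
        · rw [Int.le_floor]
          have := mul_le_mul_of_nonneg_right (h3.trans h2) hp.le
          rw [mul_assoc, h5] at this
          push_cast; linarith
      · have := strOf_val (pre A N)
        rw [length_pre] at this
        rw [Int.toNat_natCast, this]
        exact pre_mem_cyl A N
    calc μ {A | l ≤ binExp A ∧ binExp A ≤ u} ≤ μ (⋃ v ∈ I, cyl (strOf N v.toNat)) :=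
          measure_mono hsub
      _ ≤ ∑ v ∈ I, μ (cyl (strOf N v.toNat)) := measure_biUnion_finset_le _ _
      _ = ENNReal.ofReal (I.card * 2⁻¹ ^ N) := by
          have : ∀ v ∈ I, μ (cyl (strOf N v.toNat)) = (2 : ℝ≥0∞)⁻¹ ^ N := fun v _ => by
            rw [hμ, length_strOf]
          rw [Finset.sum_congr rfl this, Finset.sum_const, nsmul_eq_mul,
            ENNReal.ofReal_mul (by positivity), ENNReal.ofReal_natCast,
            ENNReal.ofReal_pow (by positivity), ENNReal.ofReal_inv_of_pos (by norm_num)]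
          simp
      _ ≤ ENNReal.ofReal (u - l + 2 * 2⁻¹ ^ N) := by
          refine ENNReal.ofReal_le_ofReal ?_
          calc (I.card : ℝ) * 2⁻¹ ^ N ≤ ((u - l) * 2 ^ N + 2) * 2⁻¹ ^ N := by gcongr
            _ = (u - l) * (2 ^ N * 2⁻¹ ^ N) + 2 * 2⁻¹ ^ N := by ring
            _ = u - l + 2 * 2⁻¹ ^ N := by rw [← mul_pow]; norm_num
  refine ge_of_tendsto' (f := fun N : ℕ => ENNReal.ofReal (u - l + 2 * 2⁻¹ ^ N)) (x := Filter.atTop)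
    ?_ key
  refine ENNReal.tendsto_ofReal ?_
  have : Filter.Tendsto (fun N : ℕ => u - l + 2 * (2 : ℝ)⁻¹ ^ N) Filter.atTop
      (nhds (u - l + 2 * 0)) :=
    ((tendsto_pow_atTop_nhds_zero_of_lt_one (by norm_num) (by norm_num)).const_mul 2).const_add _
  simpa using this

theorem cyl_subset_Icc (σ : Str) : cyl σ ⊆ {A | (lo σ : ℝ) ≤ binExp A ∧ binExp A ≤ (hi σ : ℝ)} := by
  intro A hA
  have h : pre A σ.length = σ := hA
  have h1 := lo_pre_le_binExp A σ.length
  have h2 := binExp_le_hi_pre A σ.length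
  rw [h] at h1 h2
  exact ⟨h1, h2⟩

end CantorMeasure

section RandomToOmegaLike

open MeasureTheory Filter

theorem exists_partrec_search {γ δ : Type*} [Primcodable γ] [Primcodable δ] {P : γ → ℕ → Prop}
    (hP : ComputablePred fun x : γ × ℕ => P x.1 x.2) {g : γ → ℕ → δ} (hg : Computable₂ g) :
    ∃ f : γ →. δ, Partrec f ∧ ∀ a, (∃ s, P a s) → ∃ s, P a s ∧ g a s ∈ f a := by
  obtain ⟨c, hc, h⟩ := exists_bool_of_computablePred hP
  have hfind : Partrec fun a => Nat.rfind fun s => Part.some (c (a, s)) :=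
    Partrec.rfind (p := fun a s => Part.some (c (a, s))) hc.partrec
  refine ⟨fun a => (Nat.rfind fun s => Part.some (c (a, s))).map (g a), hfind.map hg, ?_⟩
  rintro a ⟨s, hs⟩
  have hdom : (Nat.rfind fun s => Part.some (c (a, s))).Dom := by
    exact Nat.rfind_dom.2 ⟨s, by simpa using ((h (a, s)).2 hs).symm, fun _ => trivial⟩
  refine ⟨_, ?_, (Part.mem_map_iff _).2 ⟨_, Part.get_mem hdom, rfl⟩⟩
  have := Nat.rfind_spec (Part.get_mem hdom)
  exact (h (a, _)).1 (Part.mem_some_iff.1 this).symm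

/-- The state `(t, r)` of the Kučera–Slaman strategy with scale `2⁻ⁿ`: whenever `a` has reached
the target `r`, the strategy copies the growth of `b` since the last action, scaled by `2⁻ⁿ`,
to a new target. -/
def copyState (a b : ℕ → ℚ) (n : ℕ) : ℕ → ℚ × ℚ
  | 0 => (b 0 - 1, a 0)
  | s + 1 => if (copyState a b n s).2 ≤ a s then
      (b s, a s + 2⁻¹ ^ n * (b s - (copyState a b n s).1)) else copyState a b n s

theorem computable_copyState {a b : ℕ → ℚ} (ha : Computable a) (hb : Computable b) :
    Computable₂ (copyState a b) := by
  have hstep : Computable fun x : (ℕ × ℕ) × ℕ × ℚ × ℚ =>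
      if x.2.2.2 ≤ a x.2.1 then
        (b x.2.1, a x.2.1 + 2⁻¹ ^ x.1.1 * (b x.2.1 - x.2.2.1)) else x.2.2 := by
    have hs : Computable fun x : (ℕ × ℕ) × ℕ × ℚ × ℚ => x.2.1 :=
      Computable.fst.comp Computable.snd
    have hp : Computable fun x : (ℕ × ℕ) × ℕ × ℚ × ℚ => x.2.2 :=
      Computable.snd.comp Computable.snd
    have hn : Computable fun x : (ℕ × ℕ) × ℕ × ℚ × ℚ => x.1.1 :=
      Computable.fst.comp Computable.fst
    refine computable_ite (computablePred_rat_le (Computable.snd.comp hp) (ha.comp hs))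
      (Computable.pair (hb.comp hs) (rat_add_comp (ha.comp hs)
        (rat_mul_comp (rat_inv_two_pow_comp hn)
          (rat_sub_comp (hb.comp hs) (Computable.fst.comp hp))))) hp
  refine (Computable.nat_rec (f := fun x : ℕ × ℕ => x.2) (g := fun _ => (b 0 - 1, a 0))
    (h := fun x y => if y.2.2 ≤ a y.1 then
      (b y.1, a y.1 + 2⁻¹ ^ x.1 * (b y.1 - y.2.1)) else y.2)
    Computable.snd (Computable.const _) hstep).of_eq ?_
  rintro ⟨n, s⟩
  induction s with
  | zero => rfl
  | succ s ih =>
    change _ = copyState a b n (s + 1)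
    simp only at ih
    simp only [copyState, ih]

section Strategy

variable {a b : ℕ → ℚ} {n : ℕ}

theorem copyState_succ_of_le {s : ℕ} (h : (copyState a b n s).2 ≤ a s) :
    copyState a b n (s + 1) = (b s, a s + 2⁻¹ ^ n * (b s - (copyState a b n s).1)) := by
  rw [copyState, if_pos h]

theorem copyState_succ_of_lt {s : ℕ} (h : a s < (copyState a b n s).2) :
    copyState a b n (s + 1) = copyState a b n s := by
  rw [copyState, if_neg h.not_ge]

theorem copyState_fst_lt (hb : StrictMono b) (s : ℕ) : (copyState a b n s).1 < b s := by
  induction s with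
  | zero => simp [copyState]
  | succ s ih =>
    have := hb s.lt_succ_self
    rcases le_or_gt (copyState a b n s).2 (a s) with h | h
    · rw [copyState_succ_of_le h]; exact this
    · rw [copyState_succ_of_lt h]; exact ih.trans this

theorem copyState_fst_mono (hb : StrictMono b) : Monotone fun s => (copyState a b n s).1 := by
  refine monotone_nat_of_le_succ fun s => ?_
  rcases le_or_gt (copyState a b n s).2 (a s) with h | h
  · rw [copyState_succ_of_le h]; exact (copyState_fst_lt hb s).le
  · rw [copyState_succ_of_lt h]

theorem copyState_diff_mono :
    Monotone fun s => (copyState a b n s).2 - 2⁻¹ ^ n * (copyState a b n s).1 := by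
  refine monotone_nat_of_le_succ fun s => ?_
  rcases le_or_gt (copyState a b n s).2 (a s) with h | h
  · rw [copyState_succ_of_le h]; simp only; linarith
  · rw [copyState_succ_of_lt h]

theorem exists_action {α : ℝ} (hlim : Tendsto (fun s => (a s : ℝ)) atTop (nhds α))
    (hr : ∀ s, ((copyState a b n s).2 : ℝ) < α) (s : ℕ) :
    ∃ s' ≥ s, (copyState a b n s').2 ≤ a s' := by
  by_contra! hcon
  have hconst : ∀ s' ≥ s, copyState a b n s' = copyState a b n s := by
    intro s' hs'
    induction hs' with
    | refl => rfl
    | step h ih => rw [copyState_succ_of_lt (hcon _ h), ih]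
  obtain ⟨s', hs', h⟩ := ((hlim.eventually_const_lt (hr s)).and (eventually_ge_atTop s)).exists
  have := hcon s' h
  rw [hconst s' h] at this
  exact lt_asymm this (by exact_mod_cast hs')

theorem copyState_bound {α β : ℝ} (hlim : Tendsto (fun s => (a s : ℝ)) atTop (nhds α))
    (hlimb : Tendsto (fun s => (b s : ℝ)) atTop (nhds β)) (hb : StrictMono b)
    (hr : ∀ s, ((copyState a b n s).2 : ℝ) < α) (s : ℕ) :
    2⁻¹ ^ n * (β - (copyState a b n s).1) ≤ α - (copyState a b n s).2 := by
  refine le_of_tendsto' ((hlimb.sub_const _).const_mul _) fun k => ?_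
  obtain ⟨s', hs', h⟩ := exists_action hlim hr (max k s)
  have h1 := copyState_diff_mono (a := a) (b := b) (n := n)
    ((le_max_right k s).trans (hs'.trans (Nat.le_succ s')))
  have h2 := hr (s' + 1)
  simp only at h1
  have h3 : (copyState a b n (s' + 1)).1 = b s' := by rw [copyState_succ_of_le h]
  rw [h3] at h1
  have h4 : b k ≤ b s' := hb.monotone ((le_max_left _ _).trans hs')
  have h5 : (2 : ℚ)⁻¹ ^ n * b k ≤ 2⁻¹ ^ n * b s' := by gcongr
  have h6 : (copyState a b n s).2 - 2⁻¹ ^ n * (copyState a b n s).1 + 2⁻¹ ^ n * b k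
      ≤ (copyState a b n (s' + 1)).2 := by linarith
  have h7 : ((copyState a b n s).2 - 2⁻¹ ^ n * (copyState a b n s).1 + 2⁻¹ ^ n * b k : ℝ)
      ≤ (copyState a b n (s' + 1)).2 := by
    have := (Rat.cast_le (K := ℝ)).2 h6
    push_cast at this
    exact this
  linarith

theorem measure_actions_le {μ : Measure Seq} (hμ : FairCoin μ) (hb : StrictMono b) {β : ℝ}
    (hβ : ∀ s, (b s : ℝ) < β) :
    μ (⋃ σ ∈ {σ : Str | ∃ s, (copyState a b n s).2 ≤ a s ∧ a s ≤ lo σ ∧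
        hi σ ≤ a s + 2 * 2⁻¹ ^ n * (b s - (copyState a b n s).1)}, cyl σ)
      ≤ ENNReal.ofReal (2 * 2⁻¹ ^ n * (β - b 0 + 1)) := by
  set t : ℕ → ℝ := fun s => (copyState a b n s).1 with ht
  have hsub : (⋃ σ ∈ {σ : Str | ∃ s, (copyState a b n s).2 ≤ a s ∧ a s ≤ lo σ ∧
        hi σ ≤ a s + 2 * 2⁻¹ ^ n * (b s - (copyState a b n s).1)}, cyl σ) ⊆
      ⋃ s, {A | (a s : ℝ) ≤ binExp A ∧ binExp A ≤ a s + 2 * 2⁻¹ ^ n * (t (s + 1) - t s)} := by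
    refine Set.iUnion₂_subset ?_
    rintro σ ⟨s, h1, h2, h3⟩ A hA
    refine Set.mem_iUnion.2 ⟨s, ?_⟩
    have h4 : t (s + 1) = b s := by simp only [ht]; rw [copyState_succ_of_le h1]
    obtain ⟨h5, h6⟩ := cyl_subset_Icc σ hA
    have h2' : (a s : ℝ) ≤ lo σ := by exact_mod_cast h2
    have h3' : (hi σ : ℝ) ≤ a s + 2 * 2⁻¹ ^ n * (b s - (copyState a b n s).1) := by
      have := (Rat.cast_le (K := ℝ)).2 h3
      push_cast at this
      exact this
    exact ⟨h2'.trans h5, by rw [h4]; exact h6.trans h3'⟩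
  have hmono : Monotone t := fun s s' h => by
    have := copyState_fst_mono (a := a) (n := n) hb h
    simp only [ht]; exact_mod_cast this
  refine (measure_mono hsub).trans ((measure_iUnion_le _).trans ?_)
  refine ENNReal.tsum_le_of_sum_range_le fun N => ?_
  have hnn : ∀ s, 0 ≤ 2 * (2 : ℝ)⁻¹ ^ n * (t (s + 1) - t s) := fun s =>
    mul_nonneg (by positivity) (sub_nonneg.2 (hmono s.le_succ))
  calc ∑ s ∈ Finset.range N, μ {A | (a s : ℝ) ≤ binExp A ∧
          binExp A ≤ a s + 2 * 2⁻¹ ^ n * (t (s + 1) - t s)}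
      ≤ ∑ s ∈ Finset.range N, ENNReal.ofReal (2 * 2⁻¹ ^ n * (t (s + 1) - t s)) := by
        refine Finset.sum_le_sum fun s _ => ?_
        refine (hμ.measure_Icc_le (le_add_of_nonneg_right (hnn s))).trans_eq ?_
        rw [add_sub_cancel_left]
    _ = ENNReal.ofReal (2 * 2⁻¹ ^ n * (t N - t 0)) := by
        rw [← ENNReal.ofReal_sum_of_nonneg fun s _ => hnn s, ← Finset.mul_sum,
          Finset.sum_range_sub]
    _ ≤ _ := by
        refine ENNReal.ofReal_le_ofReal ?_
        have h1 : t N < b N := by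
          simp only [ht]; exact_mod_cast copyState_fst_lt hb N
        have h2 : t 0 = b 0 - 1 := by simp [ht, copyState]
        have := hβ N
        gcongr
        linarith

end Strategy

theorem exists_pre_between {A : Seq} {l u : ℝ} (hl : l < binExp A) (hu : binExp A < u) :
    ∃ N, l ≤ lo (pre A N) ∧ (hi (pre A N) : ℝ) ≤ u := by
  obtain ⟨N, hN⟩ := exists_pow_lt_of_lt_one (lt_min (sub_pos.2 hl) (sub_pos.2 hu))
    (show (2 : ℝ)⁻¹ < 1 by norm_num)
  rw [lt_min_iff] at hN
  have h1 := lo_pre_le_binExp A N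
  have h2 := binExp_le_hi_pre A N
  have h3 : (hi (pre A N) : ℝ) = lo (pre A N) + 2⁻¹ ^ N := by
    rw [hi_eq, length_pre]; push_cast; rfl
  exact ⟨N, by linarith, by linarith⟩

theorem lt_of_strictMono_tendsto {q : ℕ → ℚ} (hq : StrictMono q) {x : ℝ}
    (hlim : Tendsto (fun n => (q n : ℝ)) atTop (nhds x)) (n : ℕ) : (q n : ℝ) < x := by
  have hmono : Monotone fun n => (q n : ℝ) := fun i j h => by
    simp only; exact_mod_cast hq.monotone h
  refine lt_of_lt_of_le ?_ (hmono.ge_of_tendsto hlim (n + 1))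
  exact_mod_cast hq n.lt_succ_self

theorem solovayLE_of_mlRandom {μ : Measure Seq} (hμ : FairCoin μ) {α β : ℝ} (h0 : 0 < α)
    (h1 : α < 1) (hα : LeftCE α) (hrand : ∀ A : Seq, binExp A = α → MLRandom μ A)
    (hβ : LeftCE β) : SolovayLE β α := by
  obtain ⟨a, hac, ham, hal⟩ := hα
  obtain ⟨b, hbc, hbm, hbl⟩ := hβ
  have haα := lt_of_strictMono_tendsto ham hal
  have hbβ := lt_of_strictMono_tendsto hbm hbl
  obtain ⟨A, hA⟩ := exists_binExp_eq h0 h1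
  obtain ⟨K, hK⟩ := pow_unbounded_of_one_lt (2 * (β - b 0 + 1)) (one_lt_two (α := ℝ))
  let W : Set (ℕ × Str) := {x | ∃ s, (copyState a b (x.1 + K) s).2 ≤ a s ∧ a s ≤ lo x.2 ∧
    hi x.2 ≤ a s + 2 * 2⁻¹ ^ (x.1 + K) * (b s - (copyState a b (x.1 + K) s).1)}
  have hW : CEPred (· ∈ W) := by
    refine cePred_exists_nat (α := ℕ × Str)
      (p := fun x s => (copyState a b (x.1 + K) s).2 ≤ a s ∧ a s ≤ lo x.2 ∧
        hi x.2 ≤ a s + 2 * 2⁻¹ ^ (x.1 + K) * (b s - (copyState a b (x.1 + K) s).1)) ?_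
    have hi' : Computable fun x : (ℕ × Str) × ℕ => x.1.1 + K :=
      nat_add_comp (Computable.fst.comp Computable.fst) (Computable.const K)
    have hσ : Computable fun x : (ℕ × Str) × ℕ => x.1.2 := Computable.snd.comp Computable.fst
    have hs : Computable fun x : (ℕ × Str) × ℕ => x.2 := Computable.snd
    have hst := (computable_copyState hac hbc).comp hi' hs
    exact (computablePred_rat_le (Computable.snd.comp hst) (hac.comp hs)).and
      ((computablePred_rat_le (hac.comp hs) (computable_lo.comp hσ)).and
        (computablePred_rat_le (computable_hi.comp hσ) (rat_add_comp (hac.comp hs)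
          (rat_mul_comp (rat_mul_comp (Computable.const 2) (rat_inv_two_pow_comp hi'))
            (rat_sub_comp (hbc.comp hs) (Computable.fst.comp hst))))))
  have htest : MLTest μ fun i => ⋃ σ ∈ {σ : Str | (i, σ) ∈ W}, cyl σ := by
    refine ⟨W, hW, fun i => rfl, fun i => ?_⟩
    have hle := measure_actions_le (a := a) (n := i + K) hμ hbm hbβ
    refine le_trans (b := ENNReal.ofReal (2 * 2⁻¹ ^ (i + K) * (β - b 0 + 1))) hle ?_
    have h2 : (2 : ℝ≥0∞)⁻¹ ^ i = ENNReal.ofReal (2⁻¹ ^ i) := by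
      rw [ENNReal.ofReal_pow (by positivity), ENNReal.ofReal_inv_of_pos (by norm_num)]
      simp
    rw [h2]
    refine ENNReal.ofReal_le_ofReal ?_
    calc 2 * (2 : ℝ)⁻¹ ^ (i + K) * (β - b 0 + 1)
        = 2⁻¹ ^ i * (2⁻¹ ^ K * (2 * (β - b 0 + 1))) := by rw [pow_add]; ring
      _ ≤ 2⁻¹ ^ i * (2⁻¹ ^ K * 2 ^ K) := by gcongr
      _ = 2⁻¹ ^ i := by rw [← mul_pow]; norm_num
  have hnot := hrand A hA _ htest
  simp only [Set.mem_iInter, not_forall] at hnot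
  obtain ⟨i, hi'⟩ := hnot
  set n := i + K with hn
  have hact : ∀ s, (copyState a b n s).2 ≤ a s →
      (a s : ℝ) + 2 * 2⁻¹ ^ n * (b s - (copyState a b n s).1) ≤ α := by
    intro s hs
    by_contra! hlt
    rw [← hA] at hlt
    obtain ⟨N, hN1, hN2⟩ := exists_pre_between (by rw [hA]; exact haα s) hlt
    have hN3 : hi (pre A N) ≤ a s + 2 * 2⁻¹ ^ n * (b s - (copyState a b n s).1) := by
      refine (Rat.cast_le (K := ℝ)).1 ?_
      push_cast
      exact hN2
    exact hi' (Set.mem_iUnion₂.2 ⟨pre A N, ⟨s, hs, by exact_mod_cast hN1, hN3⟩,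
      pre_mem_cyl A N⟩)
  have hr : ∀ s, ((copyState a b n s).2 : ℝ) < α := by
    intro s
    induction s with
    | zero => exact haα 0
    | succ s ih =>
      rcases le_or_gt (copyState a b n s).2 (a s) with h | h
      · rw [copyState_succ_of_le h]
        have h2 := hact s h
        have h3 : (0 : ℝ) < b s - (copyState a b n s).1 :=
          sub_pos.2 (by exact_mod_cast copyState_fst_lt hbm s)
        have h4 : (0 : ℝ) < 2⁻¹ ^ n * (b s - (copyState a b n s).1) := by positivity
        push_cast
        linarith
      · rwa [copyState_succ_of_lt h]
  have hst : Computable (copyState a b n) :=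
    (computable_copyState hac hbc).comp (Computable.const n) Computable.id
  obtain ⟨f, hf, hfs⟩ := exists_partrec_search (P := fun (q : ℚ) s => q < (copyState a b n s).2)
    (g := fun _ s => (copyState a b n s).1)
    (computablePred_rat_lt Computable.fst (Computable.snd.comp (hst.comp Computable.snd)))
    (Computable.fst.comp (hst.comp Computable.snd))
  refine ⟨2 ^ n, f, hf, fun q hq => ?_⟩
  obtain ⟨s, hs, hmem⟩ := hfs q (by
    obtain ⟨k, hk⟩ := (hal.eventually_const_lt hq).exists
    obtain ⟨s', hs', h⟩ := exists_action hal hr k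
    refine ⟨s' + 1, ?_⟩
    rw [copyState_succ_of_le h]
    have h3 : 0 < b s' - (copyState a b n s').1 := sub_pos.2 (copyState_fst_lt hbm s')
    have h4 : 0 < 2⁻¹ ^ n * (b s' - (copyState a b n s').1) := by positivity
    have h5 : a k ≤ a s' := ham.monotone hs'
    have h6 : q < a k := by exact_mod_cast hk
    simp only
    linarith)
  refine ⟨_, hmem, ?_, ?_⟩
  · have h2 : ((copyState a b n s).1 : ℝ) < b s := by exact_mod_cast copyState_fst_lt hbm s
    exact h2.trans (hbβ s)
  · have h2 := copyState_bound hal hbl hbm hr s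
    have h3 : (q : ℝ) < (copyState a b n s).2 := by exact_mod_cast hs
    have h4 : (2 : ℝ) ^ n * 2⁻¹ ^ n = 1 := by rw [← mul_pow]; norm_num
    have h5 : (0 : ℝ) < 2 ^ n := by positivity
    calc β - ((copyState a b n s).1 : ℝ)
        = 2 ^ n * (2⁻¹ ^ n * (β - (copyState a b n s).1)) := by rw [← mul_assoc, h4, one_mul]
      _ ≤ 2 ^ n * (α - (copyState a b n s).2) := by gcongr
      _ < 2 ^ n * (α - q) := by gcongr
      _ = ((2 ^ n : ℕ) : ℝ) * (α - q) := by push_cast; rfl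

end RandomToOmegaLike

section PrefixFreeMachines

theorem _root_.ComputablePred.option_all {α β : Type*} [Primcodable α] [Primcodable β]
    {p : α → β → Prop} (hp : ComputablePred fun x : α × β => p x.1 x.2) {f : α → Option β}
    (hf : Computable f) : ComputablePred fun a => ∀ b, f a = some b → p a b := by
  obtain ⟨c, hc, h⟩ := exists_bool_of_computablePred hp
  refine computablePred_of_bool
    (Computable.option_casesOn hf (Computable.const true) (g := fun a b => c (a, b)) hc) fun a => ?_
  cases f a <;> simp [h]

theorem _root_.ComputablePred.option_any {α β : Type*} [Primcodable α] [Primcodable β]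
    {p : α → β → Prop} (hp : ComputablePred fun x : α × β => p x.1 x.2) {f : α → Option β}
    (hf : Computable f) : ComputablePred fun a => ∃ b, f a = some b ∧ p a b :=
  (ComputablePred.option_all (p := fun a b => ¬ p a b) hp.not hf).not.of_eq fun a => by simp

/-- A single-valued relation that is the projection of a computable predicate is the graph of
a partial computable function. -/
theorem exists_partrec_of_graph {α β : Type*} [Primcodable α] [Primcodable β]
    {P : α → β → ℕ → Prop} (hP : ComputablePred fun x : (α × β) × ℕ => P x.1.1 x.1.2 x.2)
    (huniq : ∀ a b b' n n', P a b n → P a b' n' → b = b') :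
    ∃ f : α →. β, Partrec f ∧ ∀ a b, b ∈ f a ↔ ∃ n, P a b n := by
  have hQ : ComputablePred fun x : α × ℕ =>
      ∃ b : β, Encodable.decode (α := β) x.2.unpair.1 = some b ∧ P x.1 b x.2.unpair.2 := by
    refine ComputablePred.option_any (p := fun (x : α × ℕ) b => P x.1 b x.2.unpair.2) ?_
      (Computable.decode.comp (Computable.fst.comp
        (Primrec.unpair.to_comp.comp Computable.snd)))
    exact hP.comp (Computable.pair (Computable.pair (Computable.fst.comp Computable.fst)
      Computable.snd) (Computable.snd.comp
        (Primrec.unpair.to_comp.comp (Computable.snd.comp Computable.fst))))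
  obtain ⟨c, hc, h⟩ := exists_bool_of_computablePred hQ
  let F : α → ℕ → Option β := fun a s =>
    if c (a, s) then Encodable.decode (α := β) s.unpair.1 else none
  have hF : Computable₂ F := by
    refine (Computable.cond hc (Computable.decode.comp (Computable.fst.comp
        (Primrec.unpair.to_comp.comp Computable.snd))) (Computable.const none)).of_eq ?_
    rintro ⟨a, s⟩
    simp only [F]
    cases c (a, s) <;> rfl
  have hFmem : ∀ a s b, b ∈ F a s → P a b s.unpair.2 := by
    intro a s b hb
    simp only [F] at hb
    split_ifs at hb with hcs
    · obtain ⟨b', h1, h2⟩ := (h (a, s)).1 hcs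
      simp only at h1 h2
      rw [h1] at hb
      rwa [← Option.some.inj hb]
    · simp at hb
  refine ⟨fun a => Nat.rfindOpt (F a), Partrec.rfindOpt hF, fun a b => ⟨fun hb => ?_, ?_⟩⟩
  · obtain ⟨s, hs⟩ := Nat.rfindOpt_spec hb
    exact ⟨_, hFmem a s b hs⟩
  · rintro ⟨n, hn⟩
    have hdom : (Nat.rfindOpt (F a)).Dom := by
      refine Nat.rfindOpt_dom.2 ⟨Nat.pair (Encodable.encode b) n, b, ?_⟩
      have : c (a, Nat.pair (Encodable.encode b) n) = true :=
        (h _).2 ⟨b, by simp, by simpa using hn⟩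
      simp [F, this]
    obtain ⟨s, hs⟩ := Nat.rfindOpt_spec (Part.get_mem hdom)
    rw [huniq a b _ _ _ hn (hFmem a s _ hs)]
    exact Part.get_mem hdom

theorem computablePred_prefix {α : Type*} [Primcodable α] {f g : α → Str} (hf : Computable f)
    (hg : Computable g) : ComputablePred fun a => f a <+: g a :=
  ((computablePred_rat_le (computable_lo.comp hf) (computable_lo.comp hg)).and
    (computablePred_rat_le (computable_hi.comp hg) (computable_hi.comp hf))).of_eq fun _ =>
      ⟨fun h => prefix_of_lo_le h.1 h.2, fun h => lo_le_of_prefix h⟩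

/-- An enumeration of program-output pairs can be thinned out to a prefix-free machine, which
keeps every pair that is not in conflict with another one. -/
theorem exists_prefixFreeMachine_of_enum {g : ℕ → Option (Str × Str)} (hg : Computable g) :
    ∃ M : Str →. Str, PrefixFreeMachine M ∧ ∀ j σ y, g j = some (σ, y) →
      (∀ j' σ' y', g j' = some (σ', y') → (σ' <+: σ ∨ σ <+: σ') → σ' = σ ∧ y' = y) →
      y ∈ M σ := by
  let P : Str → Str → ℕ → Prop := fun σ y j => g j = some (σ, y) ∧
    ∀ j' < j, ∀ x, g j' = some x → ¬ (x.1 <+: σ ∨ σ <+: x.1)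
  have hP : ComputablePred fun x : (Str × Str) × ℕ => P x.1.1 x.1.2 x.2 := by
    refine (computablePred_eq (hg.comp Computable.snd)
      (Computable.option_some.comp Computable.fst)).and ?_
    refine ComputablePred.forall_lt (p := fun (x : (Str × Str) × ℕ) j' =>
      ∀ z, g j' = some z → ¬ (z.1 <+: x.1.1 ∨ x.1.1 <+: z.1)) ?_ Computable.snd
    refine ComputablePred.option_all (p := fun (x : ((Str × Str) × ℕ) × ℕ) (z : Str × Str) =>
      ¬ (z.1 <+: x.1.1.1 ∨ x.1.1.1 <+: z.1)) ?_ (hg.comp Computable.snd)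
    have h1 : Computable fun x : (((Str × Str) × ℕ) × ℕ) × Str × Str => x.1.1.1.1 :=
      Computable.fst.comp (Computable.fst.comp (Computable.fst.comp Computable.fst))
    have h2 : Computable fun x : (((Str × Str) × ℕ) × ℕ) × Str × Str => x.2.1 :=
      Computable.fst.comp Computable.snd
    exact ((computablePred_prefix h2 h1).or (computablePred_prefix h1 h2)).not
  have hcomp : ∀ σ y n σ' y' n', P σ y n → P σ' y' n' → (σ' <+: σ ∨ σ <+: σ') → n = n' := by
    intro σ y n σ' y' n' h h' hc
    rcases lt_trichotomy n n' with hlt | heq | hlt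
    · exact absurd hc.symm (h'.2 n hlt _ h.1)
    · exact heq
    · exact absurd hc (h.2 n' hlt _ h'.1)
  have hval : ∀ σ y n σ' y' n', P σ y n → P σ' y' n' → (σ' <+: σ ∨ σ <+: σ') →
      σ = σ' ∧ y = y' := by
    intro σ y n σ' y' n' h h' hc
    have := hcomp σ y n σ' y' n' h h' hc
    subst this
    simpa using h.1.symm.trans h'.1
  obtain ⟨M, hM, hgraph⟩ := exists_partrec_of_graph hP fun σ y y' n n' h h' =>
    (hval σ y n σ y' n' h h' (Or.inl List.prefix_rfl)).2
  refine ⟨M, ⟨hM, fun σ hσ τ hτ hpre => ?_⟩, fun j σ y hj hconf => ?_⟩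
  · obtain ⟨n, hn⟩ := (hgraph σ _).1 (Part.get_mem hσ)
    obtain ⟨n', hn'⟩ := (hgraph τ _).1 (Part.get_mem hτ)
    exact (hval _ _ _ _ _ _ hn hn' (Or.inr hpre)).1
  · have hex : ∃ j, g j = some (σ, y) := ⟨j, hj⟩
    refine (hgraph σ y).2 ⟨Nat.find hex, Nat.find_spec hex, fun j' hj' x hx hc => ?_⟩
    obtain ⟨h1, h2⟩ := hconf j' x.1 x.2 hx hc
    exact Nat.find_min hex hj' (by rw [hx, ← h1, ← h2])

/-- The weight `2⁻ⁿ` of a request `(n, τ)`. -/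
def reqWeight (o : Option (ℕ × Str)) : ℚ := o.elim 0 fun x => 2⁻¹ ^ x.1

theorem reqWeight_nonneg (o : Option (ℕ × Str)) : 0 ≤ reqWeight o := by
  cases o <;> simp [reqWeight]

theorem computable_reqWeight : Computable reqWeight := by
  refine (Computable.option_casesOn Computable.id (Computable.const 0)
    (g := fun _ (x : ℕ × Str) => (2 : ℚ)⁻¹ ^ x.1)
    (rat_inv_two_pow_comp (Computable.fst.comp Computable.snd))).of_eq fun o => ?_
  cases o <;> rfl

/-- The Kraft–Chaitin theorem, with a loss of one bit. -/
theorem exists_prefixFreeMachine_of_requests {g : ℕ → Option (ℕ × Str)} (hg : Computable g)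
    (hw : ∀ N, ∑ k ∈ Finset.range N, reqWeight (g k) ≤ 1) :
    ∃ M : Str →. Str, PrefixFreeMachine M ∧ ∀ k n τ, g k = some (n, τ) →
      ∃ σ : Str, σ.length = n + 1 ∧ τ ∈ M σ := by
  set S : ℕ → ℚ := fun N => ∑ k ∈ Finset.range N, reqWeight (g k) with hS
  have hSc : Computable S :=
    computable_sum_range (F := fun (_ : ℕ) k => reqWeight (g k))
      (rat_add_comp Computable.fst Computable.snd)
      (computable_reqWeight.comp (hg.comp Computable.snd)) Computable.id
  have hS0 : ∀ N, 0 ≤ S N := fun N => Finset.sum_nonneg fun k _ => reqWeight_nonneg _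
  have hSm : Monotone S := monotone_nat_of_le_succ fun N => by
    simp only [hS, Finset.sum_range_succ]
    linarith [reqWeight_nonneg (g N)]
  let code : ℕ → ℕ → Str := fun k n => strOf (n + 1) (⌊S k * 2 ^ (n + 1)⌋₊ + 1)
  have hcode : Computable₂ code := by
    have hn : Computable fun x : ℕ × ℕ => x.2 + 1 := Computable.succ.comp Computable.snd
    exact computable_strOf.comp hn (Computable.succ.comp (rat_natFloor_comp
      (rat_mul_comp (hSc.comp Computable.fst) (rat_two_pow_comp hn))))
  have hbounds : ∀ k n τ, g k = some (n, τ) →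
      S k ≤ lo (code k n) ∧ hi (code k n) ≤ S (k + 1) := by
    intro k n τ hk
    have hsucc : S (k + 1) = S k + 2⁻¹ ^ n := by
      simp only [hS, Finset.sum_range_succ, hk]; rfl
    have hnn : 0 ≤ S k * 2 ^ (n + 1) := mul_nonneg (hS0 k) (by positivity)
    have hf1 := Nat.floor_le hnn
    have hf2 := Nat.lt_floor_add_one (S k * 2 ^ (n + 1))
    have hp : (2 : ℚ) ^ (n + 1) * 2⁻¹ ^ (n + 1) = 1 := by rw [← mul_pow]; norm_num
    have hp2 : (2 : ℚ)⁻¹ ^ n = 2 * 2⁻¹ ^ (n + 1) := by rw [pow_succ]; ring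
    have hpos : (0 : ℚ) < 2⁻¹ ^ (n + 1) := by positivity
    have hle1 : S k + 2⁻¹ ^ n ≤ 1 := hsucc ▸ hw (k + 1)
    have hlt : ⌊S k * 2 ^ (n + 1)⌋₊ + 1 < 2 ^ (n + 1) := by
      have h2 : (2 : ℚ)⁻¹ ^ n * 2 ^ (n + 1) = 2 := by
        rw [hp2, mul_assoc, mul_comm (2⁻¹ ^ _), hp]; ring
      have h3 := mul_le_mul_of_nonneg_right hle1 (show (0 : ℚ) ≤ 2 ^ (n + 1) by positivity)
      rw [add_mul, h2] at h3
      have : ((⌊S k * 2 ^ (n + 1)⌋₊ + 1 : ℕ) : ℚ) < ((2 ^ (n + 1) : ℕ) : ℚ) := by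
        push_cast; linarith
      exact_mod_cast this
    simp only [lo, hi, code, length_strOf, val_strOf hlt]
    push_cast
    constructor
    · calc S k = S k * 2 ^ (n + 1) * 2⁻¹ ^ (n + 1) := by rw [mul_assoc, hp, mul_one]
        _ ≤ _ := mul_le_mul_of_nonneg_right hf2.le hpos.le
    · calc _ ≤ (S k * 2 ^ (n + 1) + 1 + 1) * 2⁻¹ ^ (n + 1) := by gcongr
        _ = S k * (2 ^ (n + 1) * 2⁻¹ ^ (n + 1)) + 2 * 2⁻¹ ^ (n + 1) := by ring
        _ = S (k + 1) := by rw [hp, hsucc, hp2, mul_one]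
  have hdisj : ∀ k n τ k' n' τ', g k = some (n, τ) → g k' = some (n', τ') → k < k' →
      ¬ (code k n <+: code k' n' ∨ code k' n' <+: code k n) := by
    intro k n τ k' n' τ' h h' hlt
    exact not_comparable_of_hi_le_lo
      ((hbounds k n τ h).2.trans ((hSm hlt).trans (hbounds k' n' τ' h').1))
  let e : ℕ → Option (Str × Str) := fun k => (g k).map fun x => (code k x.1, x.2)
  have he : Computable e := by
    refine Computable.option_map hg (g := fun k (x : ℕ × Str) => (code k x.1, x.2)) ?_
    exact Computable.pair (hcode.comp Computable.fst (Computable.fst.comp Computable.snd))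
      (Computable.snd.comp Computable.snd)
  obtain ⟨M, hM, hax⟩ := exists_prefixFreeMachine_of_enum he
  refine ⟨M, hM, fun k n τ hk => ⟨code k n, by simp [code], ?_⟩⟩
  refine hax k _ _ (by simp [e, hk]) fun k' σ' τ' hk' hc => ?_
  simp only [e, Option.map_eq_some_iff, Prod.mk.injEq] at hk'
  obtain ⟨⟨n', τ''⟩, h1, rfl, rfl⟩ := hk'
  rcases lt_trichotomy k k' with hlt | rfl | hlt
  · exact absurd hc.symm (hdisj _ _ _ _ _ _ hk h1 hlt)
  · rw [hk] at h1
    simp only [Option.some.injEq, Prod.mk.injEq] at h1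
    simp [h1.1, h1.2]
  · exact absurd hc (hdisj _ _ _ _ _ _ h1 hk hlt)

end PrefixFreeMachines

section UniversalMachine

theorem Cplx_le_of_mem {M : Str →. Str} {σ τ : Str} (h : τ ∈ M σ) : Cplx M τ ≤ σ.length :=
  sInf_le ⟨σ, h, rfl⟩

theorem exists_mem_of_Cplx_le {M : Str →. Str} {τ : Str} {n : ℕ} (h : Cplx M τ ≤ n) :
    ∃ σ : Str, τ ∈ M σ ∧ σ.length ≤ n := by
  have hne : ((fun σ : Str => (σ.length : ℕ∞)) '' {σ | τ ∈ M σ}).Nonempty := by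
    by_contra hemp
    rw [Set.not_nonempty_iff_eq_empty] at hemp
    rw [Cplx, hemp, sInf_empty] at h
    exact absurd h (by simp)
  obtain ⟨σ, hσ, hlen⟩ := csInf_mem hne
  refine ⟨σ, hσ, ?_⟩
  have : (σ.length : ℕ∞) ≤ n := hlen.trans_le h
  exact_mod_cast this

theorem Cplx_le_add_iff {U M : Str →. Str} {c : ℕ} :
    (∀ τ, Cplx U τ ≤ Cplx M τ + c) ↔
      ∀ σ τ, τ ∈ M σ → ∃ σ' : Str, τ ∈ U σ' ∧ σ'.length ≤ σ.length + c := by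
  constructor
  · intro h σ τ hτ
    refine exists_mem_of_Cplx_le ((h τ).trans ?_)
    push_cast
    gcongr
    exact Cplx_le_of_mem hτ
  · intro h τ
    cases hM : Cplx M τ with
    | top => simp
    | coe n =>
      obtain ⟨σ, hσ, hlen⟩ := exists_mem_of_Cplx_le hM.le
      obtain ⟨σ', hσ', hlen'⟩ := h σ τ hσ
      refine (Cplx_le_of_mem hσ').trans ?_
      exact_mod_cast hlen'.trans (by omega)

theorem computable_replicate (b : Bool) : Computable fun n => List.replicate n b := by
  refine (Computable.nat_rec (f := fun n : ℕ => n) (g := fun _ => ([] : Str))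
    (h := fun _ (x : ℕ × Str) => b :: x.2) Computable.id (Computable.const _)
    (Computable.list_cons.comp (Computable.const b)
      (Computable.snd.comp Computable.snd))).of_eq fun n => ?_
  induction n with
  | zero => rfl
  | succ n ih => simp only at ih; simp only [ih, List.replicate_succ]

/-- A self-delimiting description of the pair `(e, p)`. -/
def tagged (e : ℕ) (p : Str) : Str := List.replicate e false ++ true :: p

theorem length_tagged (e : ℕ) (p : Str) : (tagged e p).length = p.length + (e + 1) := by
  simp [tagged]; omega

theorem prefix_of_tagged_prefix {e e' : ℕ} {p p' : Str} (h : tagged e p <+: tagged e' p') :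
    e = e' ∧ p <+: p' := by
  induction e generalizing e' with
  | zero => cases e' <;> simp_all [tagged, List.replicate_succ]
  | succ e ih =>
    cases e' with
    | zero => simp [tagged, List.replicate_succ] at h
    | succ e' =>
      have : tagged e p <+: tagged e' p' := by
        simpa [tagged, List.replicate_succ] using h
      simpa using ih this

theorem computable_tagged : Computable₂ tagged :=
  Computable.list_append.comp ((computable_replicate false).comp Computable.fst)
    (Computable.list_cons.comp (Computable.const true) Computable.snd)

/-- The `e`-th machine, in an effective listing of all machines. -/
def machineOf (e : ℕ) (p : Str) : Part Str :=
  (Nat.Partrec.Code.eval (Denumerable.ofNat Nat.Partrec.Code e) (Encodable.encode p)).bind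
    fun n => (Encodable.decode (α := Str) n : Part Str)

theorem partrec_machineOf : Partrec fun x : ℕ × Str => machineOf x.1 x.2 := by
  refine Partrec.bind (Nat.Partrec.Code.eval_part.comp
    ((Computable.ofNat _).comp Computable.fst) (Computable.encode.comp Computable.snd)) ?_
  exact Computable.ofOption (Computable.decode.comp Computable.snd)

theorem exists_machineOf_eq {M : Str →. Str} (hM : IsMachine M) :
    ∃ e, ∀ p, machineOf e p = M p := by
  obtain ⟨c, hc⟩ := Nat.Partrec.Code.exists_code.1 hM
  refine ⟨Encodable.encode c, fun p => ?_⟩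
  simp only [machineOf, Denumerable.ofNat_encode, hc, Encodable.encodek, Part.coe_some,
    Part.bind_some]
  ext y
  simp

theorem exists_universalPFMachine : ∃ U : Str →. Str, UniversalPFMachine U := by
  obtain ⟨h, hh, -, -, hspec⟩ := exists_stage_approximation partrec_machineOf
  let g : ℕ → Option (Str × Str) := fun j =>
    (Encodable.decode (α := ℕ × ℕ × Str) j).bind fun x =>
      (h x.1 x.2).map fun y => (tagged x.2.1 x.2.2, y)
  have hg : Computable g := by
    refine Computable.option_bind Computable.decode (g := fun (_ : ℕ) (x : ℕ × ℕ × Str) =>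
      (h x.1 x.2).map fun y => (tagged x.2.1 x.2.2, y)) ?_
    refine Computable.option_map (f := fun z : ℕ × ℕ × ℕ × Str => h z.2.1 z.2.2)
      (g := fun z y => (tagged z.2.2.1 z.2.2.2, y)) ?_ ?_
    · exact hh.comp (Computable.fst.comp Computable.snd) (Computable.snd.comp Computable.snd)
    · have h1 : Computable fun z : (ℕ × ℕ × ℕ × Str) × Str => z.1.2.2 :=
        Computable.snd.comp (Computable.snd.comp Computable.fst)
      exact Computable.pair (computable_tagged.comp (Computable.fst.comp h1)
        (Computable.snd.comp h1)) Computable.snd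
  have hgspec : ∀ j σ y, g j = some (σ, y) → ∃ e p, σ = tagged e p ∧ y ∈ machineOf e p := by
    intro j σ y hj
    simp only [g, Option.bind_eq_some_iff, Option.map_eq_some_iff, Prod.mk.injEq] at hj
    obtain ⟨⟨s, e, p⟩, -, y', h1, h2, rfl⟩ := hj
    exact ⟨e, p, h2.symm, (hspec (e, p) y').2 ⟨s, h1⟩⟩
  obtain ⟨U, hU, hax⟩ := exists_prefixFreeMachine_of_enum hg
  refine ⟨U, hU, fun M hM => ?_⟩
  obtain ⟨e, he⟩ := exists_machineOf_eq hM.1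
  refine ⟨e + 1, Cplx_le_add_iff.2 fun p τ hτ => ⟨tagged e p, ?_, (length_tagged e p).le⟩⟩
  obtain ⟨s, hs⟩ := (hspec (e, p) τ).1 (by simpa [he] using hτ)
  refine hax (Encodable.encode (s, e, p)) _ _ (by simp [g, hs]) fun j σ y hj hc => ?_
  obtain ⟨e', p', rfl, hy⟩ := hgspec j σ y hj
  have hee : e' = e ∧ (p' <+: p ∨ p <+: p') := by
    rcases hc with hc | hc
    · exact ⟨(prefix_of_tagged_prefix hc).1, Or.inl (prefix_of_tagged_prefix hc).2⟩
    · exact ⟨(prefix_of_tagged_prefix hc).1.symm, Or.inr (prefix_of_tagged_prefix hc).2⟩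
  obtain ⟨rfl, hc'⟩ := hee
  rw [he] at hy
  have hdy : (M p').Dom := Part.dom_iff_mem.2 ⟨_, hy⟩
  have hdτ : (M p).Dom := Part.dom_iff_mem.2 ⟨_, hτ⟩
  have hpp : p' = p := by
    rcases hc' with h' | h'
    · exact hM.2 _ hdy _ hdτ h'
    · exact (hM.2 _ hdτ _ hdy h').symm
  subst hpp
  exact ⟨rfl, Part.mem_unique hy hτ⟩

end UniversalMachine

section Weight

open MeasureTheory Filter

/-- The total weight `Σ_{σ ∈ S} 2^{-|σ|}` of a set of strings. -/
noncomputable def weight (S : Set Str) : ℝ := ∑' σ : Str, if σ ∈ S then (2 : ℝ)⁻¹ ^ σ.length else 0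

theorem Omega_eq_weight (V : Str →. Str) : Omega V = weight {σ | (V σ).Dom} := rfl

variable {μ : Measure Seq} {S : Set Str}

theorem PrefixFree.summable (hμ : FairCoin μ) (hS : PrefixFree S) :
    Summable fun σ : Str => if σ ∈ S then (2 : ℝ)⁻¹ ^ σ.length else 0 := by
  have h1 : ∑' σ : S, (2 : ℝ≥0∞)⁻¹ ^ (σ : Str).length ≠ ⊤ :=
    ((hμ.tsum_le_measure hS fun σ _ => Set.subset_univ _).trans_lt
      (by rw [hμ.measure_univ]; exact ENNReal.one_lt_top)).ne
  have h2 := ENNReal.summable_toReal h1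
  refine ((Function.Injective.summable_iff (f := fun σ : Str =>
    if σ ∈ S then (2 : ℝ)⁻¹ ^ σ.length else 0) (g := ((↑) : S → Str))
      Subtype.val_injective ?_).1 ?_)
  · intro σ hσ
    rw [Subtype.range_coe] at hσ
    simp [hσ]
  · refine h2.congr fun σ => ?_
    simp

theorem sum_le_weight (hμ : FairCoin μ) (hS : PrefixFree S) {F : Finset Str}
    (hF : ∀ σ ∈ F, σ ∈ S) : ∑ σ ∈ F, (2 : ℝ)⁻¹ ^ σ.length ≤ weight S := by
  have : ∑ σ ∈ F, (2 : ℝ)⁻¹ ^ σ.length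
      = ∑ σ ∈ F, if σ ∈ S then (2 : ℝ)⁻¹ ^ σ.length else 0 :=
    Finset.sum_congr rfl fun σ hσ => by rw [if_pos (hF σ hσ)]
  rw [this]
  refine (hS.summable hμ).sum_le_tsum F fun σ _ => ?_
  split_ifs <;> positivity

theorem tendsto_weight (hμ : FairCoin μ) (hS : PrefixFree S) {F : ℕ → Finset Str}
    (hmono : Monotone F) (hF : ∀ σ, σ ∈ S ↔ ∃ s, σ ∈ F s) :
    Tendsto (fun s => ∑ σ ∈ F s, (2 : ℝ)⁻¹ ^ σ.length) atTop (nhds (weight S)) := by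
  have hm : Monotone fun s => ∑ σ ∈ F s, (2 : ℝ)⁻¹ ^ σ.length := fun s t h =>
    Finset.sum_le_sum_of_subset_of_nonneg (hmono h) fun σ _ _ => by positivity
  refine tendsto_atTop_isLUB hm ⟨?_, fun b hb => ?_⟩
  · rintro _ ⟨s, rfl⟩
    exact sum_le_weight hμ hS fun σ hσ => (hF σ).2 ⟨s, hσ⟩
  · refine (hS.summable hμ).tsum_le_of_sum_le fun G => ?_
    have hex : ∃ s, ∀ σ ∈ G, σ ∈ S → σ ∈ F s := by
      have hev : ∀ σ ∈ G, ∀ᶠ s in atTop, σ ∈ S → σ ∈ F s := fun σ _ => by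
        by_cases hσ : σ ∈ S
        · obtain ⟨s, hs⟩ := (hF σ).1 hσ
          exact (eventually_ge_atTop s).mono fun t ht _ => hmono ht hs
        · exact Eventually.of_forall fun s h => absurd h hσ
      exact ((Finset.eventually_all G).2 hev).exists
    obtain ⟨s, hs⟩ := hex
    refine le_trans ?_ (hb ⟨s, rfl⟩)
    rw [← Finset.sum_filter]
    refine Finset.sum_le_sum_of_subset_of_nonneg (fun σ hσ => ?_) fun σ _ _ => by positivity
    rw [Finset.mem_filter] at hσ
    exact hs σ hσ.1 hσ.2

/-- A computable approximation of the domain of a machine by finite sets, together with their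
weights; at stage `s` only outputs of length less than `s` have appeared. -/
theorem exists_domain_approximation {V : Str →. Str} (hV : IsMachine V) :
    ∃ D : ℕ → Finset Str, Monotone D ∧ (∀ p, (V p).Dom ↔ ∃ s, p ∈ D s) ∧
      (∀ s, ∀ p ∈ D s, ∀ y ∈ V p, y.length < s) ∧
      Computable fun s => ∑ p ∈ D s, (2 : ℚ)⁻¹ ^ p.length := by
  obtain ⟨h, hh, hmono, hbd, hspec⟩ := exists_stage_approximation hV
  let Q : ℕ → Str → Prop := fun s p => ∃ y, h s p = some y ∧ y.length < s
  have hQc : ComputablePred fun x : ℕ × Str => Q x.1 x.2 :=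
    ComputablePred.option_any (p := fun (x : ℕ × Str) (y : Str) => y.length < x.1)
      (computablePred_nat_lt (Computable.list_length.comp Computable.snd)
        (Computable.fst.comp Computable.fst)) hh
  have hQbd : ∀ s p, Q s p → Encodable.encode p < s := fun s p ⟨y, hy, _⟩ => hbd s p y hy
  have hfin : ∀ s, {p | Q s p}.Finite := fun s =>
    Set.Finite.of_finite_image ((Set.finite_Iio s).subset (by
      rintro _ ⟨p, hp, rfl⟩; exact hQbd s p hp)) Encodable.encode_injective.injOn
  have hmem : ∀ s p, p ∈ (hfin s).toFinset ↔ Q s p := fun s p => by simp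
  refine ⟨fun s => (hfin s).toFinset, fun s t hst p hp => ?_, fun p => ?_,
    fun s p hp y hy => ?_, ?_⟩
  · rw [hmem] at hp ⊢
    obtain ⟨y, h1, h2⟩ := hp
    exact ⟨y, hmono s t p y hst h1, h2.trans_le hst⟩
  · simp only [hmem]
    constructor
    · intro hd
      obtain ⟨s, hs⟩ := (hspec p _).1 (Part.get_mem hd)
      exact ⟨max s (((V p).get hd).length + 1), _, hmono _ _ _ _ (le_max_left _ _) hs,
        lt_of_lt_of_le (Nat.lt_succ_self _) (le_max_right _ _)⟩
    · rintro ⟨s, y, hy, -⟩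
      exact Part.dom_iff_mem.2 ⟨y, (hspec p y).2 ⟨s, hy⟩⟩
  · rw [hmem] at hp
    obtain ⟨y', h1, h2⟩ := hp
    rwa [Part.mem_unique hy ((hspec p y').2 ⟨s, h1⟩)]
  · let T : ℕ → ℕ → ℚ := fun s n => (Encodable.decode (α := Str) n).elim 0 fun p =>
      if Q s p ∧ Encodable.encode p = n then 2⁻¹ ^ p.length else 0
    have hT : Computable₂ T := by
      refine (Computable.option_casesOn (o := fun x : ℕ × ℕ => Encodable.decode (α := Str) x.2)
        (f := fun _ => (0 : ℚ))
        (g := fun x p => if Q x.1 p ∧ Encodable.encode p = x.2 then 2⁻¹ ^ p.length else 0)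
        (Computable.decode.comp Computable.snd) (Computable.const 0) ?_).of_eq ?_
      · exact computable_ite ((hQc.comp (Computable.pair (Computable.fst.comp Computable.fst)
          Computable.snd)).and (computablePred_eq (Computable.encode.comp Computable.snd)
            (Computable.snd.comp Computable.fst)))
          (rat_inv_two_pow_comp (Computable.list_length.comp Computable.snd))
          (Computable.const 0)
      · rintro ⟨s, n⟩
        simp only [T]
        cases Encodable.decode (α := Str) n <;> rfl
    refine (computable_sum_range (rat_add_comp Computable.fst Computable.snd) hT
      Computable.id).of_eq fun s => ?_
    have h1 : ∑ p ∈ (hfin s).toFinset, (2 : ℚ)⁻¹ ^ p.length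
        = ∑ p ∈ (hfin s).toFinset, T s (Encodable.encode p) :=
      Finset.sum_congr rfl fun p hp => by simp [T, (hmem s p).1 hp]
    rw [h1, ← Finset.sum_image (f := T s) (g := Encodable.encode)
      Encodable.encode_injective.injOn]
    refine (Finset.sum_subset (fun n hn => ?_) fun n _ hn => ?_).symm
    · obtain ⟨p, hp, rfl⟩ := Finset.mem_image.1 hn
      exact Finset.mem_range.2 (hQbd s p ((hmem s p).1 hp))
    · simp only [T]
      by_contra hne
      cases hd : Encodable.decode (α := Str) n with
      | none => simp [hd] at hne
      | some p =>
        simp only [hd, Option.elim_some] at hne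
        have hq : Q s p ∧ Encodable.encode p = n := by by_contra hq; simp [hq] at hne
        exact hn (Finset.mem_image.2 ⟨p, (hmem s p).2 hq.1, hq.2⟩)

theorem leftCE_Omega (hμ : FairCoin μ) {V : Str →. Str} (hV : PrefixFreeMachine V) :
    LeftCE (Omega V) := by
  obtain ⟨D, hmono, hdom, -, hc⟩ := exists_domain_approximation hV.1
  refine ⟨fun s => ∑ p ∈ D s, (2 : ℚ)⁻¹ ^ p.length - 2⁻¹ ^ s,
    rat_sub_comp hc (rat_inv_two_pow_comp Computable.id), strictMono_nat_of_lt_succ fun s => ?_, ?_⟩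
  · have h1 : ∑ p ∈ D s, (2 : ℚ)⁻¹ ^ p.length ≤ ∑ p ∈ D (s + 1), (2 : ℚ)⁻¹ ^ p.length :=
      Finset.sum_le_sum_of_subset_of_nonneg (hmono s.le_succ) fun σ _ _ => by positivity
    have h2 : (2 : ℚ)⁻¹ ^ (s + 1) < 2⁻¹ ^ s :=
      pow_lt_pow_right_of_lt_one₀ (by norm_num) (by norm_num) s.lt_succ_self
    linarith
  · have h1 := (tendsto_weight hμ hV.2 hmono hdom).sub
      (tendsto_pow_atTop_nhds_zero_of_lt_one (show (0 : ℝ) ≤ 2⁻¹ by norm_num) (by norm_num))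
    rw [sub_zero] at h1
    refine h1.congr fun s => ?_
    push_cast
    rfl

end Weight

section DyadicDomain

open MeasureTheory Filter

/-- The strings of the dyadic decomposition of `⋃ₛ [0, m s / 2ˢ)`: the strings of length `s + 1`
whose interval lies between `m s / 2ˢ` and `m (s + 1) / 2ˢ⁺¹`. -/
def dyadicDom (m : ℕ → ℕ) : Set Str :=
  {ρ | ∃ s, ρ.length = s + 1 ∧ 2 * m s ≤ val ρ ∧ val ρ < m (s + 1)}

/-- The strings of `dyadicDom m` of length at most `T`. -/
noncomputable def dyadicLayers (m : ℕ → ℕ) (T : ℕ) : Finset Str :=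
  (Finset.range T).biUnion fun s => (Finset.Ico (2 * m s) (m (s + 1))).image (strOf (s + 1))

/-- The dyadic rationals `m s / 2ˢ` are nondecreasing, start at `0` and are bounded by `1`. -/
structure DyadicApprox (m : ℕ → ℕ) : Prop where
  zero : m 0 = 0
  two_mul_le : ∀ s, 2 * m s ≤ m (s + 1)
  le_two_pow : ∀ s, m s ≤ 2 ^ s

variable {m : ℕ → ℕ}

theorem computablePred_dyadicDom (hm : Computable m) : ComputablePred (· ∈ dyadicDom m) := by
  have hl : Computable fun ρ : Str => ρ.length := Computable.list_length
  have hl1 : Computable fun ρ : Str => ρ.length - 1 := nat_sub_comp hl (Computable.const 1)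
  refine ((computablePred_nat_lt (Computable.const 0) hl).and
    ((computablePred_nat_le (nat_mul_comp (Computable.const 2) (hm.comp hl1)) computable_val).and
      (computablePred_nat_lt computable_val (hm.comp hl)))).of_eq fun ρ => ?_
  constructor
  · rintro ⟨h1, h2, h3⟩
    have : ρ.length = ρ.length - 1 + 1 := by omega
    exact ⟨ρ.length - 1, this, h2, by rwa [← this]⟩
  · rintro ⟨s, h1, h2, h3⟩
    refine ⟨by omega, ?_, by rwa [h1]⟩
    rw [h1]; exact h2

theorem dyadicDom_bounds {ρ : Str} (hρ : ρ ∈ dyadicDom m) : ∃ s, ρ.length = s + 1 ∧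
    m s * 2⁻¹ ^ s ≤ lo ρ ∧ hi ρ ≤ m (s + 1) * 2⁻¹ ^ (s + 1) := by
  obtain ⟨s, h1, h2, h3⟩ := hρ
  have h2' : (2 * m s : ℚ) ≤ val ρ := by exact_mod_cast h2
  have h3' : (val ρ + 1 : ℚ) ≤ m (s + 1) := by exact_mod_cast h3
  refine ⟨s, h1, ?_, ?_⟩
  · calc (m s : ℚ) * 2⁻¹ ^ s = 2 * m s * 2⁻¹ ^ (s + 1) := by rw [pow_succ]; ring
      _ ≤ lo ρ := by rw [lo, h1]; gcongr
  · rw [hi, h1]; gcongr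

namespace DyadicApprox

theorem mem_layers (hm : DyadicApprox m) {T : ℕ} {ρ : Str} :
    ρ ∈ dyadicLayers m T ↔ ρ ∈ dyadicDom m ∧ ρ.length ≤ T := by
  simp only [dyadicLayers, Finset.mem_biUnion, Finset.mem_range, Finset.mem_image, Finset.mem_Ico]
  constructor
  · rintro ⟨s, hs, v, ⟨h1, h2⟩, rfl⟩
    have hv : val (strOf (s + 1) v) = v := val_strOf (h2.trans_le (hm.le_two_pow _))
    exact ⟨⟨s, by simp, by rwa [hv], by rwa [hv]⟩, by simpa using hs⟩
  · rintro ⟨⟨s, h1, h2, h3⟩, hT⟩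
    exact ⟨s, by omega, val ρ, ⟨h2, h3⟩, by rw [← h1, strOf_val]⟩

theorem monotone_layers (hm : DyadicApprox m) : Monotone (dyadicLayers m) := fun s t hst ρ hρ => by
  rw [hm.mem_layers] at hρ ⊢
  exact ⟨hρ.1, hρ.2.trans hst⟩

theorem monotone_ratio (hm : DyadicApprox m) : Monotone fun s => (m s : ℚ) * 2⁻¹ ^ s := by
  refine monotone_nat_of_le_succ fun s => ?_
  have h1 : (2 * m s : ℚ) ≤ m (s + 1) := by exact_mod_cast hm.two_mul_le s
  calc (m s : ℚ) * 2⁻¹ ^ s = 2 * m s * 2⁻¹ ^ (s + 1) := by rw [pow_succ]; ring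
    _ ≤ _ := by gcongr

theorem prefixFree (hm : DyadicApprox m) : PrefixFree (dyadicDom m) := by
  intro ρ hρ ρ' hρ' hpre
  obtain ⟨s, h1, -, h3⟩ := dyadicDom_bounds hρ
  obtain ⟨s', h1', h2', -⟩ := dyadicDom_bounds hρ'
  have hle := hpre.length_le
  rcases hle.eq_or_lt with heq | hlt
  · exact hpre.eq_of_length heq
  · have : hi ρ ≤ lo ρ' := h3.trans ((hm.monotone_ratio (by omega)).trans h2')
    exact absurd (Or.inl hpre) (not_comparable_of_hi_le_lo this)

theorem sum_layers (hm : DyadicApprox m) (T : ℕ) :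
    ∑ ρ ∈ dyadicLayers m T, (2 : ℝ)⁻¹ ^ ρ.length = m T * 2⁻¹ ^ T := by
  induction T with
  | zero => simp [dyadicLayers, hm.zero]
  | succ T ih =>
    have hsplit : dyadicLayers m (T + 1) =
        dyadicLayers m T ∪ (Finset.Ico (2 * m T) (m (T + 1))).image (strOf (T + 1)) := by
      simp only [dyadicLayers, Finset.range_add_one, Finset.biUnion_insert]
      rw [Finset.union_comm]
    have hdisj : Disjoint (dyadicLayers m T)
        ((Finset.Ico (2 * m T) (m (T + 1))).image (strOf (T + 1))) := by
      refine Finset.disjoint_left.2 fun ρ h1 h2 => ?_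
      obtain ⟨v, -, rfl⟩ := Finset.mem_image.1 h2
      have := (hm.mem_layers.1 h1).2
      simp at this
    have hinj : Set.InjOn (strOf (T + 1)) (Finset.Ico (2 * m T) (m (T + 1)) : Finset ℕ) := by
      intro v hv w hw h
      simp only [Finset.coe_Ico, Set.mem_Ico] at hv hw
      exact strOf_injOn (hv.2.trans_le (hm.le_two_pow _)) (hw.2.trans_le (hm.le_two_pow _)) h
    rw [hsplit, Finset.sum_union hdisj, ih, Finset.sum_image hinj]
    simp only [length_strOf, Finset.sum_const, Nat.card_Ico, nsmul_eq_mul]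
    rw [Nat.cast_sub (hm.two_mul_le T), pow_succ]
    push_cast
    ring

end DyadicApprox

theorem exists_dyadicApprox {G : ℕ → ℚ} (hG : Computable G) (hmono : Monotone G) {x : ℝ}
    (hlim : Tendsto (fun s => (G s : ℝ)) atTop (nhds x)) (h0 : 0 < x) (h1 : x ≤ 1) :
    ∃ m : ℕ → ℕ, Computable m ∧ DyadicApprox m ∧
      (∀ s, (m s : ℝ) * 2⁻¹ ^ s < x) ∧ (∀ s, (m s : ℚ) * 2⁻¹ ^ s ≤ max (G s) 0) ∧
      Tendsto (fun s => (m s : ℝ) * 2⁻¹ ^ s) atTop (nhds x) := by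
  have hGx : ∀ s, (G s : ℝ) ≤ x := fun s =>
    Monotone.ge_of_tendsto (fun i j h => Rat.cast_le.2 (hmono h)) hlim s
  let m : ℕ → ℕ := fun s => ⌊G s * 2 ^ s⌋₊ - 1
  have hp : ∀ s : ℕ, (2 : ℝ) ^ s * 2⁻¹ ^ s = 1 := fun s => by rw [← mul_pow]; norm_num
  have hpq : ∀ s : ℕ, (2 : ℚ) ^ s * 2⁻¹ ^ s = 1 := fun s => by rw [← mul_pow]; norm_num
  have hfl : ∀ s, m s ≠ 0 → (m s : ℚ) + 1 ≤ G s * 2 ^ s := by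
    intro s hs
    have h2 : m s + 1 ≤ ⌊G s * 2 ^ s⌋₊ := by simp only [m] at hs ⊢; omega
    have h3 : (⌊G s * 2 ^ s⌋₊ : ℚ) ≤ G s * 2 ^ s := by
      refine Nat.floor_le ?_
      by_contra hneg
      rw [Nat.floor_of_nonpos (le_of_not_ge hneg)] at h2
      omega
    have h4 : ((m s + 1 : ℕ) : ℚ) ≤ ⌊G s * 2 ^ s⌋₊ := by exact_mod_cast h2
    push_cast at h4
    exact h4.trans h3
  have hmul : ∀ s, m s ≠ 0 → ((m s : ℚ) + 1) * 2⁻¹ ^ s ≤ G s := fun s hs => by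
    calc ((m s : ℚ) + 1) * 2⁻¹ ^ s ≤ G s * 2 ^ s * 2⁻¹ ^ s := by gcongr; exact hfl s hs
      _ = G s := by rw [mul_assoc, hpq, mul_one]
  have hlt : ∀ s, (m s : ℝ) * 2⁻¹ ^ s < x := by
    intro s
    by_cases hs : m s = 0
    · simpa [hs] using h0
    · have h2 := (Rat.cast_le (K := ℝ)).2 (hmul s hs)
      push_cast at h2
      have h3 : (0 : ℝ) < 2⁻¹ ^ s := by positivity
      have := hGx s
      rw [add_mul, one_mul] at h2
      linarith
  have hle : ∀ s, m s ≤ 2 ^ s := by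
    intro s
    have h2 : (m s : ℝ) * 2⁻¹ ^ s * 2 ^ s ≤ 1 * 2 ^ s := by
      gcongr
      exact (hlt s).le.trans h1
    rw [mul_assoc, mul_comm ((2 : ℝ)⁻¹ ^ s), hp, mul_one, one_mul] at h2
    exact_mod_cast h2
  refine ⟨m, ?_, ⟨?_, fun s => ?_, hle⟩, hlt, fun s => ?_, ?_⟩
  · exact nat_sub_comp (rat_natFloor_comp (rat_mul_comp hG (rat_two_pow_comp Computable.id)))
      (Computable.const 1)
  · by_contra hne
    have h2 := hlt 0
    have h3 : (1 : ℝ) ≤ m 0 := by exact_mod_cast Nat.one_le_iff_ne_zero.2 hne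
    simp at h2
    linarith
  · have h2 : 2 * ⌊G s * 2 ^ s⌋₊ ≤ ⌊G (s + 1) * 2 ^ (s + 1)⌋₊ := by
      rcases le_or_gt (G s * 2 ^ s) 0 with hneg | hpos
      · rw [Nat.floor_of_nonpos hneg]; simp
      · refine Nat.le_floor ?_
        have h3 := Nat.floor_le hpos.le
        have h4 : G s * 2 ^ s ≤ G (s + 1) * 2 ^ s := by gcongr; exact hmono s.le_succ
        push_cast
        rw [pow_succ]
        linarith
    simp only [m]
    omega
  · by_cases hs : m s = 0
    · simp [hs]
    · refine le_trans ?_ ((hmul s hs).trans (le_max_left _ _))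
      gcongr
      linarith
  · have hlow : ∀ s, (G s : ℝ) - 2 * 2⁻¹ ^ s ≤ m s * 2⁻¹ ^ s := by
      intro s
      have h2 : G s * 2 ^ s ≤ m s + 2 := by
        have h3 := Nat.lt_floor_add_one (G s * 2 ^ s)
        have h4 : ⌊G s * 2 ^ s⌋₊ ≤ m s + 1 := by simp only [m]; omega
        have h5 : (⌊G s * 2 ^ s⌋₊ : ℚ) ≤ ((m s + 1 : ℕ) : ℚ) := by exact_mod_cast h4
        push_cast at h5
        linarith
      have h3 : (G s : ℝ) * 2 ^ s ≤ m s + 2 := by exact_mod_cast h2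
      have h4 : (G s : ℝ) * 2 ^ s * 2⁻¹ ^ s ≤ (m s + 2) * 2⁻¹ ^ s := by gcongr
      rw [mul_assoc, hp, mul_one, add_mul] at h4
      linarith
    have h2 : Tendsto (fun s => (G s : ℝ) - 2 * 2⁻¹ ^ s) atTop (nhds (x - 2 * 0)) :=
      hlim.sub ((tendsto_pow_atTop_nhds_zero_of_lt_one (by norm_num) (by norm_num)).const_mul 2)
    rw [mul_zero, sub_zero] at h2
    exact tendsto_of_tendsto_of_tendsto_of_le_of_le h2 tendsto_const_nhds hlow fun s => (hlt s).le

end DyadicDomain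

section OmegaLikeToOmega

open MeasureTheory Filter

theorem val_replicate_true (k : ℕ) : val (List.replicate k true) + 1 = 2 ^ k := by
  induction k with
  | zero => rfl
  | succ k ih =>
    rw [List.replicate_succ', val_concat, pow_succ]
    simp only [Bool.toNat_true]
    omega

theorem lo_replicate_true (k : ℕ) : lo (List.replicate k true) = 1 - 2⁻¹ ^ k := by
  have h1 : (val (List.replicate k true) : ℚ) + 1 = 2 ^ k := by exact_mod_cast val_replicate_true k
  have h2 : (2 : ℚ) ^ k * 2⁻¹ ^ k = 1 := by rw [← mul_pow]; norm_num
  rw [lo, List.length_replicate, eq_sub_iff_add_eq, ← h2, ← h1]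
  ring

/-- Adding the strings of a dyadic domain to a shifted copy of a universal machine gives a
universal machine. -/
theorem exists_universalPFMachine_Omega_eq {μ : Measure Seq} (hμ : FairCoin μ) {U : Str →. Str}
    (hU : UniversalPFMachine U) {k : ℕ} {m : ℕ → ℕ} (hmc : Computable m) (hm : DyadicApprox m)
    (hbd : ∀ s, (m s : ℚ) * 2⁻¹ ^ s ≤ 1 - 2⁻¹ ^ k) {x : ℝ}
    (hlim : Tendsto (fun s => (m s : ℝ) * 2⁻¹ ^ s) atTop (nhds x)) :
    ∃ V : Str →. Str, UniversalPFMachine V ∧ Omega V = 2⁻¹ ^ k * Omega U + x := by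
  obtain ⟨h, hh, -, -, hspec⟩ := exists_stage_approximation hU.1.1
  let P : Str → Str → ℕ → Prop := fun σ y n =>
    (∃ p, Encodable.decode (α := Str) n.unpair.1 = some p ∧ σ = List.replicate k true ++ p ∧
      h n.unpair.2 p = some y) ∨ (σ ∈ dyadicDom m ∧ y = [])
  have hP : ComputablePred fun x : (Str × Str) × ℕ => P x.1.1 x.1.2 x.2 := by
    refine ComputablePred.or ?_ (((computablePred_dyadicDom hmc).comp
      (Computable.fst.comp Computable.fst)).and
        (computablePred_eq (Computable.snd.comp Computable.fst) (Computable.const [])))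
    have hun : Computable fun x : (Str × Str) × ℕ => x.2.unpair :=
      Primrec.unpair.to_comp.comp Computable.snd
    refine ComputablePred.option_any (p := fun (x : (Str × Str) × ℕ) (p : Str) =>
      x.1.1 = List.replicate k true ++ p ∧ h x.2.unpair.2 p = some x.1.2) ?_
      (Computable.decode.comp (Computable.fst.comp hun))
    have hxs : Computable fun z : ((Str × Str) × ℕ) × Str => z.1.1 :=
      Computable.fst.comp Computable.fst
    refine (computablePred_eq (Computable.fst.comp hxs)
      (Computable.list_append.comp (Computable.const _) Computable.snd)).and
      (computablePred_eq (hh.comp (Computable.snd.comp (hun.comp Computable.fst)) Computable.snd)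
        (Computable.option_some.comp (Computable.snd.comp hxs)))
  have hinc : ∀ ρ ∈ dyadicDom m, ∀ p, ¬ (ρ <+: List.replicate k true ++ p ∨
      List.replicate k true ++ p <+: ρ) := by
    intro ρ hρ p
    obtain ⟨s, -, -, h3⟩ := dyadicDom_bounds hρ
    refine not_comparable_of_hi_le_lo (h3.trans ((hbd _).trans ?_))
    rw [← lo_replicate_true]
    exact (lo_le_of_prefix (List.prefix_append _ _)).1
  have hPspec : ∀ σ y, (∃ n, P σ y n) ↔ (∃ p, σ = List.replicate k true ++ p ∧ y ∈ U p) ∨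
      (σ ∈ dyadicDom m ∧ y = []) := by
    intro σ y
    constructor
    · rintro ⟨n, ⟨p, -, h2, h3⟩ | h'⟩
      · exact Or.inl ⟨p, h2, (hspec p y).2 ⟨_, h3⟩⟩
      · exact Or.inr h'
    · rintro (⟨p, rfl, h2⟩ | h')
      · obtain ⟨s, hs⟩ := (hspec p y).1 h2
        exact ⟨Nat.pair (Encodable.encode p) s, Or.inl ⟨p, by simp, rfl, by simpa using hs⟩⟩
      · exact ⟨0, Or.inr h'⟩
  obtain ⟨V, hV, hgraph⟩ := exists_partrec_of_graph hP (by
    intro σ y y' n n' hy hy'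
    rcases (hPspec σ y).1 ⟨n, hy⟩ with ⟨p, rfl, h2⟩ | ⟨h1, rfl⟩ <;>
      rcases (hPspec _ y').1 ⟨n', hy'⟩ with ⟨p', h1', h2'⟩ | ⟨h1', rfl⟩
    · rw [List.append_cancel_left h1'] at h2
      exact Part.mem_unique h2 h2'
    · exact absurd (Or.inl List.prefix_rfl) (hinc _ h1' p)
    · exact absurd (Or.inl (h1' ▸ List.prefix_rfl)) (hinc _ h1 p')
    · rfl)
  have hmem : ∀ σ y, y ∈ V σ ↔ (∃ p, σ = List.replicate k true ++ p ∧ y ∈ U p) ∨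
      (σ ∈ dyadicDom m ∧ y = []) := fun σ y => (hgraph σ y).trans (hPspec σ y)
  have hdom : ∀ σ, (V σ).Dom ↔ (∃ p, σ = List.replicate k true ++ p ∧ (U p).Dom) ∨
      σ ∈ dyadicDom m := by
    intro σ
    simp only [Part.dom_iff_mem, hmem]
    constructor
    · rintro ⟨y, ⟨p, h1, h2⟩ | ⟨h1, -⟩⟩
      · exact Or.inl ⟨p, h1, y, h2⟩
      · exact Or.inr h1
    · rintro (⟨p, h1, y, h2⟩ | h1)
      · exact ⟨y, Or.inl ⟨p, h1, h2⟩⟩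
      · exact ⟨[], Or.inr ⟨h1, rfl⟩⟩
  have hpf : PrefixFree {σ | (V σ).Dom} := by
    intro σ hσ τ hτ hpre
    rcases (hdom σ).1 hσ with ⟨p, rfl, h2⟩ | h1 <;>
      rcases (hdom τ).1 hτ with ⟨p', rfl, h2'⟩ | h1'
    · rw [hU.1.2 _ h2 _ h2' ((List.prefix_append_right_inj _).1 hpre)]
    · exact absurd (Or.inr hpre) (hinc _ h1' p)
    · exact absurd (Or.inl hpre) (hinc _ h1 p')
    · exact hm.prefixFree _ h1 _ h1' hpre
  refine ⟨V, ⟨⟨hV, hpf⟩, fun M hM => ?_⟩, ?_⟩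
  · obtain ⟨c, hc⟩ := hU.2 M hM
    refine ⟨c + k, Cplx_le_add_iff.2 fun σ τ hτ => ?_⟩
    obtain ⟨p, hp, hlen⟩ := Cplx_le_add_iff.1 hc σ τ hτ
    exact ⟨List.replicate k true ++ p, (hmem _ _).2 (Or.inl ⟨p, rfl, hp⟩), by simp; omega⟩
  · obtain ⟨D, hDm, hDd, -, -⟩ := exists_domain_approximation hU.1.1
    let F : ℕ → Finset Str := fun s =>
      (D s).image (List.replicate k true ++ ·) ∪ dyadicLayers m s
    have hFm : Monotone F := fun s t hst =>
      Finset.union_subset_union (Finset.image_subset_image (hDm hst)) (hm.monotone_layers hst)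
    have hFd : ∀ σ, σ ∈ {σ | (V σ).Dom} ↔ ∃ s, σ ∈ F s := by
      intro σ
      simp only [Set.mem_ofPred_eq, hdom, F, Finset.mem_union, Finset.mem_image, hm.mem_layers]
      constructor
      · rintro (⟨p, rfl, h2⟩ | h1)
        · obtain ⟨s, hs⟩ := (hDd p).1 h2
          exact ⟨s, Or.inl ⟨p, hs, rfl⟩⟩
        · exact ⟨σ.length, Or.inr ⟨h1, le_rfl⟩⟩
      · rintro ⟨s, ⟨p, h1, rfl⟩ | h1⟩
        · exact Or.inl ⟨p, rfl, (hDd p).2 ⟨s, h1⟩⟩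
        · exact Or.inr h1.1
    have hFsum : ∀ s, ∑ σ ∈ F s, (2 : ℝ)⁻¹ ^ σ.length
        = 2⁻¹ ^ k * ∑ p ∈ D s, (2 : ℝ)⁻¹ ^ p.length + m s * 2⁻¹ ^ s := by
      intro s
      have hdisj : Disjoint ((D s).image (List.replicate k true ++ ·)) (dyadicLayers m s) := by
        refine Finset.disjoint_left.2 fun σ h1 h2 => ?_
        obtain ⟨p, -, rfl⟩ := Finset.mem_image.1 h1
        exact hinc _ (hm.mem_layers.1 h2).1 p (Or.inl List.prefix_rfl)
      rw [Finset.sum_union hdisj, hm.sum_layers,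
        Finset.sum_image fun p _ p' _ hp => List.append_cancel_left hp, Finset.mul_sum]
      simp [pow_add]
    have h1 := tendsto_weight hμ hpf hFm hFd
    simp only [hFsum] at h1
    exact tendsto_nhds_unique h1
      (((tendsto_weight hμ hU.1.2 hDm hDd).const_mul _).add hlim)

theorem computable_partialSups {g : ℕ → ℚ} (hg : Computable g) :
    Computable fun s => partialSups g s := by
  refine (Computable.nat_rec (f := fun s : ℕ => s) (g := fun _ => g 0)
    (h := fun _ (x : ℕ × ℚ) => if x.2 ≤ g (x.1 + 1) then g (x.1 + 1) else x.2)
    Computable.id (Computable.const _) ?_).of_eq fun s => ?_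
  · have h1 : Computable fun x : ℕ × ℕ × ℚ => g (x.2.1 + 1) :=
      hg.comp (Computable.succ.comp (Computable.fst.comp Computable.snd))
    have h2 : Computable fun x : ℕ × ℕ × ℚ => x.2.2 := Computable.snd.comp Computable.snd
    exact computable_ite (computablePred_rat_le h2 h1) h1 h2
  · induction s with
    | zero => simp
    | succ s ih =>
      simp only at ih
      simp only [ih]
      rw [partialSups_add_one, max_def]

theorem exists_Omega_eq_of_solovayLE {μ : Measure Seq} (hμ : FairCoin μ) {α : ℝ} (h0 : 0 < α)
    (h1 : α < 1) (hα : LeftCE α) (hS : ∀ β : ℝ, LeftCE β → SolovayLE β α) :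
    ∃ V : Str →. Str, UniversalPFMachine V ∧ Omega V = α := by
  obtain ⟨U, hU⟩ := exists_universalPFMachine
  obtain ⟨c, f, hf, hred⟩ := hS _ (leftCE_Omega hμ hU.1)
  obtain ⟨a, hac, ham, hal⟩ := hα
  have haα := lt_of_strictMono_tendsto ham hal
  have hΩ : 0 ≤ Omega U := by
    refine tsum_nonneg fun σ => ?_
    split_ifs <;> positivity
  obtain ⟨k, hk⟩ := exists_pow_lt_of_lt_one (show 0 < min (α / (Omega U + 1))
    (min (1 - α) (1 / (c + 1))) from lt_min (by positivity)
      (lt_min (sub_pos.2 h1) (by positivity))) (show (2 : ℝ)⁻¹ < 1 by norm_num)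
  rw [lt_min_iff, lt_min_iff] at hk
  obtain ⟨hk1, hk2, hk3⟩ := hk
  rw [lt_div_iff₀ (by positivity)] at hk1 hk3
  have hkpos : (0 : ℝ) < 2⁻¹ ^ k := by positivity
  set γ := α - 2⁻¹ ^ k * Omega U with hγ
  choose F hFmem hFlt hFdist using fun s => hred (a s) (haα s)
  have hFc : Computable F := (hf.comp hac).of_eq_tot hFmem
  let g : ℕ → ℚ := fun s => a s - F s * 2⁻¹ ^ k
  have hgc : Computable g :=
    rat_sub_comp hac (rat_mul_comp hFc (Computable.const _))
  have hgγ : ∀ s, (g s : ℝ) ≤ γ := by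
    intro s
    have h2 : 2⁻¹ ^ k * (Omega U - F s) ≤ 2⁻¹ ^ k * (c * (α - a s)) := by
      gcongr; exact (hFdist s).le
    have h3 : 2⁻¹ ^ k * c * (α - a s) ≤ 1 * (α - a s) := by
      gcongr
      · exact sub_nonneg.2 (haα s).le
      · linarith
    simp only [g, hγ]
    push_cast
    linarith
  have hga : ∀ s, γ - (α - a s) ≤ g s := by
    intro s
    have h2 : 2⁻¹ ^ k * (F s : ℝ) ≤ 2⁻¹ ^ k * Omega U := by
      gcongr; exact (hFlt s).le
    simp only [g, hγ]
    push_cast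
    linarith
  have hGle : ∀ s, ((partialSups g s : ℚ) : ℝ) ≤ γ := by
    intro s
    induction s with
    | zero => simpa using hgγ 0
    | succ s ih =>
      rw [partialSups_add_one, Rat.cast_max]
      exact max_le ih (hgγ _)
  have hGlim : Tendsto (fun s => ((partialSups g s : ℚ) : ℝ)) atTop (nhds γ) := by
    have h2 : Tendsto (fun s => γ - (α - a s)) atTop (nhds (γ - (α - α))) :=
      (hal.const_sub α).const_sub γ
    rw [sub_self, sub_zero] at h2
    exact tendsto_of_tendsto_of_tendsto_of_le_of_le h2 tendsto_const_nhds
      (fun s => (hga s).trans (Rat.cast_le.2 (le_partialSups g s))) hGle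
  have hγ0 : 0 < γ := by rw [hγ]; linarith
  have hγ1 : γ ≤ 1 - 2⁻¹ ^ k := by
    have : 0 ≤ 2⁻¹ ^ k * Omega U := by positivity
    rw [hγ]; linarith
  obtain ⟨m, hmc, hm, hmlt, -, hmlim⟩ := exists_dyadicApprox (computable_partialSups hgc)
    (partialSups g).monotone hGlim hγ0 (hγ1.trans (by linarith))
  obtain ⟨V, hV, hVΩ⟩ := exists_universalPFMachine_Omega_eq (k := k) hμ hU hmc hm (fun s => by
    have h2 := (hmlt s).le.trans hγ1
    refine (Rat.cast_le (K := ℝ)).1 ?_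
    push_cast
    exact h2) hmlim
  exact ⟨V, hV, by rw [hVΩ, hγ]; ring⟩

end OmegaLikeToOmega

section OmegaToRandom

open MeasureTheory Filter

/-- The Kraft–Chaitin theorem for a computable set `R` of requests indexed by an encodable type,
each asking for a program of `out x` of length `len x`, up to an additive constant. -/
theorem exists_prefixFreeMachine_of_tsum_le {γ : Type*} [Primcodable γ] {R : γ → Prop}
    (hR : ComputablePred R) {len : γ → ℕ} (hlen : Computable len) {out : γ → Str}
    (hout : Computable out) (hw : ∑' x, (if R x then (2 : ℝ≥0∞)⁻¹ ^ len x else 0) ≤ 1) :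
    ∃ M, PrefixFreeMachine M ∧ ∀ x, R x → ∃ σ, σ.length = len x + 1 ∧ out x ∈ M σ := by
  let g : ℕ → Option (ℕ × Str) := fun k => (Encodable.decode (α := γ) k).bind fun x =>
    if R x ∧ Encodable.encode x = k then some (len x, out x) else none
  have hg : Computable g := by
    refine Computable.option_bind Computable.decode (computable_ite ((hR.comp Computable.snd).and
      (computablePred_eq (Computable.encode.comp Computable.snd) Computable.fst)) ?_
        (Computable.const none))
    exact Computable.option_some.comp
      ((hlen.comp Computable.snd).pair (hout.comp Computable.snd))
  have hge : ∀ x, g (Encodable.encode x) = if R x then some (len x, out x) else none := by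
    intro x
    simp [g]
  have hsupp : Function.support (fun k => ENNReal.ofReal (reqWeight (g k)))
      ⊆ Set.range (Encodable.encode (α := γ)) := by
    intro k hk
    by_contra hn
    refine hk ?_
    have : g k = none := by
      simp only [g, Option.bind_eq_none_iff]
      intro x _
      rw [if_neg]
      rintro ⟨-, h⟩
      exact hn ⟨x, h⟩
    simp [this, reqWeight]
  obtain ⟨M, hM, hMspec⟩ := exists_prefixFreeMachine_of_requests hg (by
    intro N
    have h1 : ENNReal.ofReal (∑ k ∈ Finset.range N, (reqWeight (g k) : ℝ)) ≤ 1 := by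
      rw [ENNReal.ofReal_sum_of_nonneg fun k _ => by exact_mod_cast reqWeight_nonneg _]
      refine (ENNReal.sum_le_tsum _).trans ?_
      rw [← Encodable.encode_injective.tsum_eq hsupp]
      refine le_trans (le_of_eq (tsum_congr fun x => ?_)) hw
      rw [hge]
      split_ifs
      · simp only [reqWeight, Option.elim_some]
        push_cast
        rw [ENNReal.ofReal_pow (by positivity), ENNReal.ofReal_inv_of_pos (by norm_num)]
        simp
      · simp [reqWeight]
    rw [ENNReal.ofReal_le_one] at h1
    exact_mod_cast h1)
  exact ⟨M, hM, fun x hx => hMspec _ _ _ ((hge x).trans (if_pos hx))⟩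

theorem two_inv_pow_sub_le (n e : ℕ) : (2 : ℝ≥0∞)⁻¹ ^ (n - e) ≤ 2 ^ e * 2⁻¹ ^ n := by
  have h2 : (2 : ℝ≥0∞) ^ e * 2⁻¹ ^ e = 1 := by
    rw [← mul_pow, ENNReal.mul_inv_cancel (by norm_num) (by norm_num), one_pow]
  rcases le_total e n with h | h
  · obtain ⟨d, rfl⟩ := Nat.exists_eq_add_of_le h
    rw [Nat.add_sub_cancel_left, pow_add, ← mul_assoc, h2, one_mul]
  · rw [Nat.sub_eq_zero_of_le h, pow_zero, ← h2]
    gcongr 2 ^ e * ?_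
    exact pow_le_pow_right_of_le_one' (by simp) h

/-- If `V` is a universal prefix-free machine, then every Martin-Löf test has a component none of
whose strings `σ` satisfies `lo σ < Ω_V ≤ hi σ`. -/
theorem UniversalPFMachine.exists_not_mem_interval {μ : Measure Seq} (hμ : FairCoin μ)
    {V : Str →. Str} (hV : UniversalPFMachine V) (h0 : 0 < Omega V) (h1 : Omega V ≤ 1)
    {W : Set (ℕ × Str)} (hW : CEPred (· ∈ W))
    (hμW : ∀ i, μ (⋃ σ ∈ {σ : Str | (i, σ) ∈ W}, cyl σ) ≤ (2 : ℝ≥0∞)⁻¹ ^ i) :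
    ∃ i, ∀ σ, (i, σ) ∈ W → (lo σ : ℝ) < Omega V → (hi σ : ℝ) < Omega V := by
  by_contra! hcov
  obtain ⟨D, hDm, hDd, hDlen, hDc⟩ := exists_domain_approximation hV.1.1
  have hDlim := tendsto_weight hμ hV.1.2 hDm hDd
  rw [← Omega_eq_weight] at hDlim
  obtain ⟨m, hmc, hm, hmlt, hmD, hmlim⟩ := exists_dyadicApprox hDc
    (fun s t hst => Finset.sum_le_sum_of_subset_of_nonneg (hDm hst) fun σ _ _ => by positivity)
    (by simpa using hDlim) h0 h1
  obtain ⟨w, hwc, hwm, hw⟩ := hW.exists_stage_approximation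
  obtain ⟨R, hR⟩ : ∃ R : ℕ × Str → Prop, ∀ x, R x ↔ x.2 ∈ dyadicDom m ∧ ∃ n < x.2.length,
      ∃ σ : Str, Encodable.decode (α := Str) n = some σ ∧ σ <+: x.2 ∧
        w x.2.length (2 * x.1 + 2, σ) := ⟨_, fun _ => Iff.rfl⟩
  let out : ℕ × Str → Str := fun x =>
    List.replicate (Nat.pair (Encodable.encode x) x.2.length) true
  have hlen : Computable fun x : ℕ × Str => x.2.length := Computable.list_length.comp Computable.snd
  have hout : Computable out := (computable_replicate true).comp
    (Primrec₂.natPair.to_comp.comp Computable.encode hlen)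
  have houtinj : Function.Injective out := by
    intro x y hxy
    have h2 := congrArg List.length hxy
    simp only [out, List.length_replicate, Nat.pair_eq_pair] at h2
    exact Encodable.encode_injective h2.1
  have hRc : ComputablePred R := by
    refine ComputablePred.of_eq (((computablePred_dyadicDom hmc).comp Computable.snd).and
      (ComputablePred.exists_lt (p := fun (x : ℕ × Str) n => ∃ σ : Str,
        Encodable.decode (α := Str) n = some σ ∧ σ <+: x.2 ∧
          w x.2.length (2 * x.1 + 2, σ)) ?_ hlen))
      fun x => (hR x).symm
    refine ComputablePred.option_any (p := fun (z : (ℕ × Str) × ℕ) (σ : Str) =>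
      σ <+: z.1.2 ∧ w z.1.2.length (2 * z.1.1 + 2, σ)) ?_ (Computable.decode.comp Computable.snd)
    have hx : Computable fun z : ((ℕ × Str) × ℕ) × Str => z.1.1 :=
      Computable.fst.comp Computable.fst
    exact (computablePred_prefix Computable.snd (Computable.snd.comp hx)).and
      (hwc.comp ((hlen.comp hx).pair ((nat_add_comp (nat_mul_comp (Computable.const 2)
        (Computable.fst.comp hx)) (Computable.const 2)).pair Computable.snd)))
  have hRw : ∀ e, ∑' ρ, (if R (e, ρ) then (2 : ℝ≥0∞)⁻¹ ^ (ρ.length - e) else 0)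
      ≤ 2⁻¹ * 2⁻¹ ^ (e + 1) := by
    intro e
    have hpf : PrefixFree {ρ | R (e, ρ)} := fun ρ hρ ρ' hρ' =>
      hm.prefixFree ρ ((hR _).1 hρ).1 ρ' ((hR _).1 hρ').1
    have hsub : ∀ ρ ∈ {ρ | R (e, ρ)},
        cyl ρ ⊆ ⋃ σ ∈ {σ : Str | (2 * e + 2, σ) ∈ W}, cyl σ := by
      intro ρ hρ
      obtain ⟨-, n, -, σ, -, hσ, hwσ⟩ := (hR _).1 hρ
      exact (cyl_subset_of_prefix hσ).trans
        (Set.subset_biUnion_of_mem (u := fun σ : Str => cyl σ) ((hw _).2 ⟨_, hwσ⟩))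
    calc ∑' ρ, (if R (e, ρ) then (2 : ℝ≥0∞)⁻¹ ^ (ρ.length - e) else 0)
        = ∑' ρ : {ρ | R (e, ρ)}, (2 : ℝ≥0∞)⁻¹ ^ ((ρ : Str).length - e) := by
          rw [tsum_subtype {ρ | R (e, ρ)} fun ρ : Str => (2 : ℝ≥0∞)⁻¹ ^ (ρ.length - e)]
          simp [Set.indicator_apply]
      _ ≤ ∑' ρ : {ρ | R (e, ρ)}, 2 ^ e * (2 : ℝ≥0∞)⁻¹ ^ (ρ : Str).length :=
          ENNReal.tsum_le_tsum fun ρ => two_inv_pow_sub_le _ _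
      _ ≤ 2 ^ e * 2⁻¹ ^ (2 * e + 2) := by
          rw [ENNReal.tsum_mul_left]
          gcongr
          exact (hμ.tsum_le_measure hpf hsub).trans (hμW _)
      _ = 2⁻¹ * 2⁻¹ ^ (e + 1) := by
          have h2 : (2 : ℝ≥0∞) ^ e * 2⁻¹ ^ e = 1 := by
            rw [← mul_pow, ENNReal.mul_inv_cancel (by norm_num) (by norm_num), one_pow]
          rw [show 2 * e + 2 = e + (1 + (e + 1)) by ring, pow_add, pow_add, ← mul_assoc, h2,
            one_mul, pow_one]
  obtain ⟨M, hM, hMspec⟩ := exists_prefixFreeMachine_of_tsum_le hRc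
    (nat_sub_comp hlen Computable.fst) hout (by
      rw [ENNReal.tsum_prod']
      refine (ENNReal.tsum_le_tsum hRw).trans ?_
      rw [ENNReal.tsum_mul_left, ENNReal.tsum_geometric_add_one, ENNReal.one_sub_inv_two, inv_inv,
        ENNReal.inv_mul_cancel (by norm_num) (by norm_num), mul_one]
      simp)
  obtain ⟨c, hc⟩ := hV.2 M hM
  rw [Cplx_le_add_iff] at hc
  obtain ⟨σ, hσW, hσlo, hσhi⟩ := hcov (2 * (c + 2) + 2)
  obtain ⟨s₀, hs₀⟩ := (hw _).1 hσW
  obtain ⟨s₁, hs₁⟩ := (hmlim.eventually_const_lt hσlo).exists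
  obtain ⟨t, ht₀, ht₁, ht₂, ht₃⟩ : ∃ t, s₀ ≤ t ∧ s₁ ≤ t ∧ Encodable.encode σ ≤ t ∧ c + 2 ≤ t :=
    ⟨s₀ + s₁ + Encodable.encode σ + (c + 2), by omega, by omega, by omega, by omega⟩
  have hprog : ∀ ρ ∈ dyadicDom m, t < ρ.length →
      ∃ p, out (c + 2, ρ) ∈ V p ∧ p.length + 1 ≤ ρ.length := by
    intro ρ hρ htρ
    obtain ⟨s, hs, hlo, hhi⟩ := dyadicDom_bounds hρ
    have hpre : σ <+: ρ := by
      refine prefix_of_lo_le ?_ ?_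
      · refine le_trans ?_ ((hm.monotone_ratio (show s₁ ≤ s by omega)).trans hlo)
        refine (Rat.cast_le (K := ℝ)).1 ?_
        push_cast
        exact hs₁.le
      · refine (Rat.cast_le (K := ℝ)).1 (le_trans ?_ hσhi)
        refine ((Rat.cast_le (K := ℝ)).2 hhi).trans ?_
        push_cast
        exact (hmlt (s + 1)).le
    obtain ⟨q, hq, hqM⟩ := hMspec (c + 2, ρ) ((hR _).2 ⟨hρ, Encodable.encode σ,
      ht₂.trans_lt htρ, σ, Encodable.encodek σ, hpre, hwm _ _ _ (ht₀.trans htρ.le) hs₀⟩)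
    obtain ⟨p, hp, hpl⟩ := hc q _ hqM
    refine ⟨p, hp, ?_⟩
    simp only at hq
    omega
  choose! p hpV hplen using hprog
  have hbound : ∀ T, t ≤ T → 2 * ((m T : ℝ) * 2⁻¹ ^ T - m t * 2⁻¹ ^ t)
      + ∑ q ∈ D t, (2 : ℝ)⁻¹ ^ q.length ≤ Omega V := by
    intro T hT
    let L := dyadicLayers m T \ dyadicLayers m t
    have hL : ∀ ρ ∈ L, ρ ∈ dyadicDom m ∧ t < ρ.length := by
      intro ρ hρ
      obtain ⟨h2, h3⟩ := Finset.mem_sdiff.1 hρ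
      rw [hm.mem_layers] at h2 h3
      exact ⟨h2.1, by by_contra! h4; exact h3 ⟨h2.1, h4⟩⟩
    have hinj : Set.InjOn p L := by
      intro ρ hρ ρ' hρ' hpp
      have h2 := hpV ρ (hL ρ hρ).1 (hL ρ hρ).2
      have h3 := hpV ρ' (hL ρ' hρ').1 (hL ρ' hρ').2
      rw [hpp] at h2
      exact congrArg Prod.snd (houtinj (Part.mem_unique h2 h3))
    have hdisj : Disjoint (L.image p) (D t) := by
      refine Finset.disjoint_left.2 fun q hq hqD => ?_
      obtain ⟨ρ, hρ, rfl⟩ := Finset.mem_image.1 hq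
      have h2 := hDlen t _ hqD _ (hpV ρ (hL ρ hρ).1 (hL ρ hρ).2)
      rw [List.length_replicate] at h2
      exact absurd ((hL ρ hρ).2.trans_le (Nat.right_le_pair _ _)) h2.not_gt
    have hsum : 2 * ((m T : ℝ) * 2⁻¹ ^ T - m t * 2⁻¹ ^ t)
        ≤ ∑ q ∈ L.image p, (2 : ℝ)⁻¹ ^ q.length := by
      rw [Finset.sum_image hinj, ← hm.sum_layers, ← hm.sum_layers,
        ← Finset.sum_sdiff_eq_sub (hm.monotone_layers hT), Finset.mul_sum]
      refine Finset.sum_le_sum fun ρ hρ => ?_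
      have h2 : (2 : ℝ)⁻¹ ^ ρ.length ≤ 2⁻¹ ^ ((p ρ).length + 1) :=
        pow_le_pow_of_le_one (by norm_num) (by norm_num) (hplen ρ (hL ρ hρ).1 (hL ρ hρ).2)
      rw [pow_succ] at h2
      linarith
    refine (add_le_add_left hsum _).trans ?_
    rw [← Finset.sum_union hdisj]
    refine sum_le_weight hμ hV.1.2 fun q hq => ?_
    rcases Finset.mem_union.1 hq with hq | hq
    · obtain ⟨ρ, hρ, rfl⟩ := Finset.mem_image.1 hq
      exact Part.dom_iff_mem.2 ⟨_, hpV ρ (hL ρ hρ).1 (hL ρ hρ).2⟩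
    · exact (hDd q).2 ⟨t, hq⟩
  have hlimit : 2 * (Omega V - m t * 2⁻¹ ^ t) + ∑ q ∈ D t, (2 : ℝ)⁻¹ ^ q.length ≤ Omega V :=
    le_of_tendsto (((hmlim.sub_const _).const_mul 2).add_const _)
      ((eventually_ge_atTop t).mono hbound)
  have hmt : (m t : ℝ) * 2⁻¹ ^ t ≤ ∑ q ∈ D t, (2 : ℝ)⁻¹ ^ q.length := by
    have h2 := hmD t
    rw [max_eq_left (Finset.sum_nonneg fun q _ => by positivity)] at h2
    have h3 := (Rat.cast_le (K := ℝ)).2 h2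
    push_cast at h3
    exact h3
  linarith [hmlt t]

theorem exists_test_of_lo_pos {μ : Measure Seq} (hμ : FairCoin μ) {σ : Str} (hσ : 0 < lo σ) :
    ∃ W : Set (ℕ × Str), CEPred (· ∈ W) ∧
      (∀ i, μ (⋃ τ ∈ {τ : Str | (i, τ) ∈ W}, cyl τ) ≤ (2 : ℝ≥0∞)⁻¹ ^ i) ∧
      ∀ i, ∃ τ, (i, τ) ∈ W ∧ lo τ < lo σ ∧ hi τ = lo σ := by
  have hv : 0 < val σ := Nat.pos_of_ne_zero fun h => by simp [lo, h] at hσ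
  let f : ℕ → Str := fun i => strOf (i + σ.length) (val σ * 2 ^ i - 1)
  have hf : Computable f := computable_strOf.comp
    (nat_add_comp Computable.id (Computable.const _))
    (nat_sub_comp (nat_mul_comp (Computable.const _)
      (nat_pow_comp (Computable.const 2) Computable.id)) (Computable.const 1))
  refine ⟨{x | x.2 = f x.1}, ?_, fun i => ?_, fun i => ⟨f i, rfl, ?_⟩⟩
  · have h2 := cePred_exists_nat (α := ℕ × Str) (p := fun x _ => x.2 = f x.1)
      (computablePred_eq (Computable.snd.comp Computable.fst)
        (hf.comp (Computable.fst.comp Computable.fst)))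
    simpa using h2
  · have h2 : (⋃ τ ∈ {τ : Str | (i, τ) ∈ {x : ℕ × Str | x.2 = f x.1}}, cyl τ) = cyl (f i) := by
      simp
    rw [h2, hμ]
    exact pow_le_pow_right_of_le_one' (by simp) (by simp [f])
  · have hhi : hi (f i) = lo σ := by
      have hlt : val σ * 2 ^ i - 1 < 2 ^ (i + σ.length) := by
        refine (Nat.sub_le _ _).trans_lt ?_
        rw [pow_add, mul_comm]
        exact Nat.mul_lt_mul_of_pos_left (val_lt σ) (by positivity)
      have hval : (val (f i) : ℚ) + 1 = val σ * 2 ^ i := by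
        have h2 : val (f i) + 1 = val σ * 2 ^ i := by
          simp only [f]
          rw [val_strOf hlt]
          exact Nat.sub_add_cancel (Nat.mul_pos hv (by positivity))
        exact_mod_cast h2
      have h2 : (2 : ℚ) ^ i * 2⁻¹ ^ i = 1 := by rw [← mul_pow]; norm_num
      rw [hi, hval, lo, length_strOf, pow_add]
      linear_combination (val σ * 2⁻¹ ^ σ.length : ℚ) * h2
    exact ⟨hhi ▸ lo_lt_hi _, hhi⟩

theorem mlRandom_of_Omega {μ : Measure Seq} (hμ : FairCoin μ) {V : Str →. Str}
    (hV : UniversalPFMachine V) (h0 : 0 < Omega V) (h1 : Omega V ≤ 1) {A : Seq}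
    (hA : binExp A = Omega V) : MLRandom μ A := by
  rintro U ⟨W, hW, hU, hμU⟩ hmem
  obtain ⟨i, hi⟩ := hV.exists_not_mem_interval hμ h0 h1 hW fun i => hU i ▸ hμU i
  have hAi := Set.mem_iInter.1 hmem i
  rw [hU] at hAi
  obtain ⟨σ, hσ, hAσ⟩ := Set.mem_iUnion₂.1 hAi
  obtain ⟨hlo, hhi⟩ := cyl_subset_Icc σ hAσ
  rw [hA] at hlo hhi
  rcases hlo.lt_or_eq with hlt | heq
  · exact absurd hhi (hi σ hσ hlt).not_ge
  · obtain ⟨W', hW', hμW', hcov⟩ := exists_test_of_lo_pos hμ (σ := σ) (by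
      rw [← heq] at h0
      exact_mod_cast h0)
    obtain ⟨j, hj⟩ := hV.exists_not_mem_interval hμ h0 h1 hW' hμW'
    obtain ⟨τ, hτ, hτlo, hτhi⟩ := hcov j
    have h2 := hj τ hτ (heq ▸ Rat.cast_lt.2 hτlo)
    rw [hτhi, heq] at h2
    exact lt_irrefl _ h2

end OmegaToRandom

/-- **Characterization of `Ω`-numbers** (Solovay; Calude–Hertling–Khoussainov–Wang;
Kučera–Slaman): for a left-c.e. real `α ∈ (0,1)` the following are equivalent:
(i) `α = Ω_V` for some universal prefix-free machine `V`; (ii) `α` is `Ω`-like, i.e.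
`β ≤_S α` for every left-c.e. real `β`; (iii) `α` is Martin-Löf random. -/
theorem omega_number_characterization (μ : MeasureTheory.Measure Seq)
    (hμ : FairCoin μ) (α : ℝ) (h0 : 0 < α) (h1 : α < 1) (hα : LeftCE α) :
    List.TFAE
      [∃ V : Str →. Str, UniversalPFMachine V ∧ Omega V = α,
       ∀ β : ℝ, LeftCE β → SolovayLE β α,
       ∀ A : Seq, binExp A = α → MLRandom μ A] := by
  tfae_have 1 → 3 := by
    rintro ⟨V, hV, rfl⟩ A hA
    exact mlRandom_of_Omega hμ hV h0 h1.le hA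
  tfae_have 3 → 2 := fun hrand β hβ => solovayLE_of_mlRandom hμ h0 h1 hα hrand hβ
  tfae_have 2 → 1 := exists_Omega_eq_of_solovayLE hμ h0 h1 hα
  tfae_finish

end AR
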